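/- arXiv:2205.12114 — 2 statements merged into one kernel-verified Lean document; each statement's English description precedes it below -/
import Mathlib

section
/- The emptiness problem for register set automata is decidable: the set of (encodings of) RsAs A with L(A) = ∅ is a computable (decidable) set. -/
/-- A data word over the alphabet `Fin k`, with data domain `𝔻 = ℕ`. -/
abbrev DataWord (k : ℕ) : Type :=
  List (Fin k × ℕ)

/-- A transition of a (concretely encoded) register set automaton:
`(src, letter, gIn, gNin, upd, tgt)`.  Guards are lists of registers; the update is
a list indexed by register number, `none` standing for the current input `in` and
`some r` for register `r`. -/
structure CTrans (k : ℕ) where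
  src : ℕ
  letter : Fin k
  gIn : List ℕ
  gNin : List ℕ
  upd : List (List (Option ℕ))
  tgt : ℕ

instance (k : ℕ) : Primcodable (CTrans k) :=
  Primcodable.ofEquiv (ℕ × Fin k × List ℕ × List ℕ × List (List (Option ℕ)) × ℕ)
    { toFun := fun t => (t.src, t.letter, t.gIn, t.gNin, t.upd, t.tgt)
      invFun := fun p => ⟨p.1, p.2.1, p.2.2.1, p.2.2.2.1, p.2.2.2.2.1, p.2.2.2.2.2⟩
      left_inv := fun t => rfl
      right_inv := fun p => rfl }

/-- A (concretely encoded) register set automaton, whose states are `0, …, nQ - 1`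
and registers are `0, …, nR - 1` (initial segments of `ℕ`). -/
structure CRsA (k : ℕ) where
  nQ : ℕ
  nR : ℕ
  trans : List (CTrans k)
  I : List ℕ
  F : List ℕ

instance (k : ℕ) : Primcodable (CRsA k) :=
  Primcodable.ofEquiv (ℕ × ℕ × List (CTrans k) × List ℕ × List ℕ)
    { toFun := fun A => (A.nQ, A.nR, A.trans, A.I, A.F)
      invFun := fun p => ⟨p.1, p.2.1, p.2.2.1, p.2.2.2.1, p.2.2.2.2⟩
      left_inv := fun A => rfl
      right_inv := fun p => rfl }

/-- The register assignment obtained after taking transition `t` with current input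
data value `d`, starting from the assignment `f`. -/
def CTrans.apply {k : ℕ} (t : CTrans k) (f : ℕ → Finset ℕ) (d : ℕ) :
    ℕ → Finset ℕ := fun r =>
  ((t.upd.getD r []).map fun o =>
    match o with
    | none => ({d} : Finset ℕ)
    | some r' => f r').foldr (· ∪ ·) ∅

/-- One step of a `CRsA` from configuration `c` to configuration `c'`, reading
the letter `x`. -/
def CRsA.Step {k : ℕ} (A : CRsA k) (c : ℕ × (ℕ → Finset ℕ)) (x : Fin k × ℕ)
    (c' : ℕ × (ℕ → Finset ℕ)) : Prop :=
  ∃ t ∈ A.trans, t.src = c.1 ∧ t.letter = x.1 ∧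
    (∀ r ∈ t.gIn, x.2 ∈ c.2 r) ∧ (∀ r ∈ t.gNin, x.2 ∉ c.2 r) ∧
    c' = (t.tgt, t.apply c.2 x.2)

/-- Runs of a `CRsA`. -/
inductive CRsA.Run {k : ℕ} (A : CRsA k) :
    (ℕ × (ℕ → Finset ℕ)) → DataWord k → (ℕ × (ℕ → Finset ℕ)) → Prop where
  | nil (c : ℕ × (ℕ → Finset ℕ)) : CRsA.Run A c [] c
  | cons {c c' c'' : ℕ × (ℕ → Finset ℕ)} {x : Fin k × ℕ} {w : DataWord k} :
      A.Step c x c' → CRsA.Run A c' w c'' → CRsA.Run A c (x :: w) c''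

/-- The language of a `CRsA`. -/
def CRsA.Lang {k : ℕ} (A : CRsA k) : Set (DataWord k) :=
  { w | ∃ q₀ ∈ A.I, ∃ c : ℕ × (ℕ → Finset ℕ),
      A.Run (q₀, fun _ => ∅) w c ∧ c.1 ∈ A.F }

/-- Well-formedness of a `CRsA`: all states and registers mentioned lie in the
respective initial segments, the two guards of each transition are disjoint, and
the update is a function on the registers. -/
def CRsA.WellFormed {k : ℕ} (A : CRsA k) : Prop :=
  (∀ q ∈ A.I, q < A.nQ) ∧ (∀ q ∈ A.F, q < A.nQ) ∧
  ∀ t ∈ A.trans, t.src < A.nQ ∧ t.tgt < A.nQ ∧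
    (∀ r ∈ t.gIn, r < A.nR) ∧ (∀ r ∈ t.gNin, r < A.nR) ∧
    (∀ r ∈ t.gIn, r ∉ t.gNin) ∧
    t.upd.length = A.nR ∧
    ∀ l ∈ t.upd, ∀ r' : ℕ, some r' ∈ l → r' < A.nR

namespace RsAProof

variable {k : ℕ}

/-- Configurations. -/
abbrev Cfg : Type := ℕ × (ℕ → Finset ℕ)

/-- Acceptance within at most `n` steps, with data values satisfying `P`. -/
def Acc (A : CRsA k) (P : ℕ → Prop) : ℕ → Cfg → Prop
  | 0, c => c.1 ∈ A.F
  | n + 1, c => Acc A P n c ∨ ∃ x c', P x.2 ∧ A.Step c x c' ∧ Acc A P n c'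

theorem mem_apply (t : CTrans k) (f : ℕ → Finset ℕ) (d e r : ℕ) :
    e ∈ t.apply f d r ↔
      ∃ o ∈ t.upd.getD r [], (o = none ∧ e = d) ∨ ∃ r', o = some r' ∧ e ∈ f r' := by
  unfold CTrans.apply
  induction t.upd.getD r [] with
  | nil => simp
  | cons o l ih =>
    simp only [List.map_cons, List.foldr_cons, Finset.mem_union, ih, List.mem_cons,
      exists_eq_or_imp]
    cases o <;> simp

theorem Acc.mono {A : CRsA k} {P Q : ℕ → Prop} (h : ∀ d, P d → Q d) {n : ℕ} :
    ∀ {c : Cfg}, Acc A P n c → Acc A Q n c := by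
  induction n with
  | zero => exact fun h => h
  | succ n ih =>
    rintro c (hc | ⟨x, c', hx, hs, hc⟩)
    · exact Or.inl (ih hc)
    · exact Or.inr ⟨x, c', h _ hx, hs, ih hc⟩

theorem Acc.le {A : CRsA k} {P : ℕ → Prop} {c : Cfg} {m n : ℕ} (h : m ≤ n) (hm : Acc A P m c) :
    Acc A P n c := by
  induction h with
  | refl => exact hm
  | step _ ih => exact Or.inl ih

theorem upd_lt {A : CRsA k} (hA : A.WellFormed) {t : CTrans k} (ht : t ∈ A.trans) {r r' : ℕ}
    (h : some r' ∈ t.upd.getD r []) : r < A.nR ∧ r' < A.nR := by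
  obtain ⟨_, _, h3⟩ := hA
  obtain ⟨_, _, _, _, _, hl, hu⟩ := h3 t ht
  by_cases hr : r < t.upd.length
  · refine ⟨hl ▸ hr, hu _ ?_ _ h⟩
    rw [List.getD_eq_getElem _ _ hr]
    exact List.getElem_mem hr
  · rw [List.getD_eq_default _ _ (by omega)] at h
    simp at h

/-- Key transfer lemma: an accepting run only uses few data values. -/
theorem transfer {A : CRsA k} (hA : A.WellFormed) (P : ℕ → Prop) (n : ℕ) :
    ∀ q f, Acc A P n (q, f) → ∃ D : Finset ℕ, D.card ≤ n ∧
      ∀ (Q : ℕ → Prop) (ρ : ℕ → ℕ → Prop),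
        (∀ d e d' e', ρ d e → ρ d' e' → (d = d' ↔ e = e')) →
        (∀ d ∈ D, ∃ e, Q e ∧ ρ d e) → ∀ f0 : ℕ → Finset ℕ,
        (∀ d ∈ D, ∀ e, ρ d e → ∀ r < A.nR, (d ∈ f r ↔ e ∈ f0 r)) → Acc A Q n (q, f0) := by
  induction n with
  | zero =>
    intro q f h
    exact ⟨∅, by simp, fun Q ρ _ _ f0 _ => h⟩
  | succ n ih =>
    rintro q f (h | ⟨⟨a, d⟩, c', hP, ⟨t, ht, hsrc, hlet, hin, hnin, rfl⟩, h⟩)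
    · obtain ⟨D, hD, H⟩ := ih q f h
      exact ⟨D, by omega, fun Q ρ h1 h2 f0 h3 => Or.inl (H Q ρ h1 h2 f0 h3)⟩
    · obtain ⟨D, hD, H⟩ := ih _ _ h
      refine ⟨insert d D, (Finset.card_insert_le _ _).trans (by omega), ?_⟩
      intro Q ρ h1 h2 f0 h3
      obtain ⟨e, hQ, he⟩ := h2 d (Finset.mem_insert_self _ _)
      have hwf := hA.2.2 t ht
      have h4 := h3 d (Finset.mem_insert_self _ _) e he
      refine Or.inr ⟨(a, e), _, hQ, ⟨t, ht, hsrc, hlet, ?_, ?_, rfl⟩, ?_⟩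
      · intro r hr
        exact (h4 r (hwf.2.2.1 r hr)).1 (hin r hr)
      · intro r hr
        exact fun h => hnin r hr ((h4 r (hwf.2.2.2.1 r hr)).2 h)
      · refine H Q ρ h1 (fun d hd => h2 d (Finset.mem_insert_of_mem hd)) _ ?_
        intro d' hd' e' he' r hr
        rw [mem_apply, mem_apply]
        refine exists_congr fun o => and_congr_right fun ho => or_congr ?_ ?_
        · exact and_congr_right fun _ => h1 _ _ _ _ he' he
        · refine exists_congr fun r' => and_congr_right fun hr' => ?_
          subst hr'
          exact h3 d' (Finset.mem_insert_of_mem hd') e' he' r' (upd_lt hA ht ho).2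

/-- The order on register assignments. -/
def Emb (N : ℕ) (f f' : ℕ → Finset ℕ) : Prop :=
  ∀ D : Finset ℕ, ∃ τ : ℕ → ℕ, Set.InjOn τ D ∧ ∀ d ∈ D, ∀ r < N, (d ∈ f r ↔ τ d ∈ f' r)

theorem Acc.emb {A : CRsA k} (hA : A.WellFormed) {n q : ℕ} {f f' : ℕ → Finset ℕ}
    (he : Emb A.nR f f') (h : Acc A (fun _ => True) n (q, f)) :
    Acc A (fun _ => True) n (q, f') := by
  obtain ⟨D, _, H⟩ := transfer hA _ n q f h
  obtain ⟨τ, hτ, hd⟩ := he D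
  refine H _ (fun d e => d ∈ D ∧ e = τ d) ?_ (fun d hd => ⟨τ d, trivial, hd, rfl⟩) f' ?_
  · rintro d e d' e' ⟨h1, rfl⟩ ⟨h2, rfl⟩
    exact ⟨fun h => h ▸ rfl, fun h => hτ h1 h2 h⟩
  · rintro d hdD e ⟨_, rfl⟩ r hr
    exact hd d hdD r hr

theorem rank_inj (D : Finset ℕ) {d e : ℕ} (hd : d ∈ D) (he : e ∈ D)
    (h : (D.filter (· < d)).card = (D.filter (· < e)).card) : d = e := by
  by_contra hne
  wlog hlt : d < e generalizing d e
  · exact this he hd h.symm (Ne.symm hne) (by omega)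
  have : D.filter (· < d) ⊂ D.filter (· < e) := by
    rw [Finset.ssubset_iff_of_subset]
    · exact ⟨d, by simp [hd, hlt], by simp⟩
    · intro x; simp only [Finset.mem_filter]; rintro ⟨h1, h2⟩; exact ⟨h1, by omega⟩
  have := Finset.card_lt_card this
  omega

theorem rank_lt (D : Finset ℕ) {d : ℕ} (hd : d ∈ D) : (D.filter (· < d)).card < D.card := by
  refine Finset.card_lt_card ?_
  rw [Finset.ssubset_iff_of_subset (Finset.filter_subset _ _)]
  exact ⟨d, hd, by simp⟩

/-- Bounding the data values used. -/
theorem Acc.bounded {A : CRsA k} (hA : A.WellFormed) {n q m N : ℕ} {f : ℕ → Finset ℕ}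
    (hf : ∀ r < A.nR, f r ⊆ Finset.range m) (hN : m + n ≤ N)
    (h : Acc A (fun _ => True) n (q, f)) : Acc A (fun d => d < N) n (q, f) := by
  obtain ⟨D, hD, H⟩ := transfer hA _ n q f h
  let τ : ℕ → ℕ := fun d => if d < m then d else m + (D.filter (· < d)).card
  refine H _ (fun d e => d ∈ D ∧ e = τ d) ?_ (fun d hd => ⟨τ d, ?_, hd, rfl⟩) f ?_
  · rintro d e d' e' ⟨h1, rfl⟩ ⟨h2, rfl⟩
    refine ⟨fun h => h ▸ rfl, fun h => ?_⟩
    simp only [τ] at h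
    split_ifs at h
    · exact h
    · omega
    · omega
    · exact rank_inj D h1 h2 (by omega)
  · simp only [τ]
    have := rank_lt D hd
    split_ifs <;> omega
  · rintro d hdD e ⟨_, rfl⟩ r hr
    simp only [τ]
    split_ifs with hdm
    · rfl
    · constructor
      · intro h; have := hf r hr h; simp at this; omega
      · intro h; have := hf r hr h; simp at this

/-- Every accepted configuration dominates a small accepted one. -/
theorem Acc.small {A : CRsA k} (hA : A.WellFormed) {n q : ℕ} {f : ℕ → Finset ℕ}
    (h : Acc A (fun _ => True) n (q, f)) :
    ∃ f0 : ℕ → Finset ℕ, (∀ r, f0 r ⊆ Finset.range n) ∧ (∀ r, A.nR ≤ r → f0 r = ∅) ∧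
      Emb A.nR f0 f ∧ Acc A (fun _ => True) n (q, f0) := by
  obtain ⟨D, hD, H⟩ := transfer hA _ n q f h
  let τ : ℕ → ℕ := fun d => (D.filter (· < d)).card
  have hτ : Set.InjOn τ D := fun d hd e he h => rank_inj D hd he h
  let f0 : ℕ → Finset ℕ := fun r => if r < A.nR then (D.filter (· ∈ f r)).image τ else ∅
  have hf0 : ∀ r < A.nR, ∀ d ∈ D, (d ∈ f r ↔ τ d ∈ f0 r) := by
    intro r hr d hd
    simp only [f0, if_pos hr, Finset.mem_image, Finset.mem_filter]
    constructor
    · intro h; exact ⟨d, ⟨hd, h⟩, rfl⟩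
    · rintro ⟨e, ⟨he, hef⟩, hh⟩
      rwa [← hτ he hd hh]
  refine ⟨f0, ?_, ?_, ?_, ?_⟩
  · intro r
    simp only [f0]
    split_ifs
    · intro x hx
      simp only [Finset.mem_image, Finset.mem_filter] at hx
      obtain ⟨e, ⟨he, _⟩, rfl⟩ := hx
      have := rank_lt D he
      simp only [Finset.mem_range, τ]
      omega
    · simp
  · intro r hr
    simp only [f0, if_neg (not_lt.2 hr)]
  · intro D'
    obtain ⟨M, hM⟩ : ∃ M, ∀ x ∈ D ∪ (Finset.range A.nR).biUnion f, x < M := by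
      obtain ⟨M, hM⟩ := (D ∪ (Finset.range A.nR).biUnion f).bddAbove
      exact ⟨M + 1, fun x hx => Nat.lt_succ_of_le (hM hx)⟩
    classical
    let σ : ℕ → ℕ := fun e => if h : ∃ d ∈ D, τ d = e then h.choose else e + M
    have hσ : ∀ d ∈ D, σ (τ d) = d := by
      intro d hd
      have h : ∃ d' ∈ D, τ d' = τ d := ⟨d, hd, rfl⟩
      simp only [σ, dif_pos h]
      exact hτ h.choose_spec.1 hd h.choose_spec.2
    have hσ' : ∀ e, (¬ ∃ d ∈ D, τ d = e) → σ e = e + M := fun e h => dif_neg h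
    refine ⟨σ, ?_, ?_⟩
    · intro e _ e' _ h
      by_cases h1 : ∃ d ∈ D, τ d = e <;> by_cases h2 : ∃ d ∈ D, τ d = e'
      · obtain ⟨d, hd, rfl⟩ := h1
        obtain ⟨d', hd', rfl⟩ := h2
        rw [hσ d hd, hσ d' hd'] at h
        rw [h]
      · obtain ⟨d, hd, rfl⟩ := h1
        rw [hσ d hd, hσ' _ h2] at h
        have := hM d (Finset.mem_union_left _ hd)
        omega
      · obtain ⟨d, hd, rfl⟩ := h2
        rw [hσ d hd, hσ' _ h1] at h
        have := hM d (Finset.mem_union_left _ hd)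
        omega
      · rw [hσ' _ h1, hσ' _ h2] at h
        omega
    · intro e _ r hr
      by_cases h1 : ∃ d ∈ D, τ d = e
      · obtain ⟨d, hd, rfl⟩ := h1
        rw [hσ d hd]
        exact (hf0 r hr d hd).symm
      · rw [hσ' e h1]
        constructor
        · intro h
          simp only [f0, if_pos hr, Finset.mem_image, Finset.mem_filter] at h
          obtain ⟨d, hd, hd'⟩ := h
          exact absurd ⟨d, hd.1, hd'⟩ h1
        · intro h
          have := hM (e + M) (Finset.mem_union_right _ (Finset.mem_biUnion.2 ⟨r, by simpa using hr, h⟩))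
          omega
  · refine H _ (fun d e => d ∈ D ∧ e = τ d) ?_ (fun d hd => ⟨τ d, trivial, hd, rfl⟩) f0 ?_
    · rintro d e d' e' ⟨h1, rfl⟩ ⟨h2, rfl⟩
      exact ⟨fun h => h ▸ rfl, fun h => hτ h1 h2 h⟩
    · rintro d hdD e ⟨_, rfl⟩ r hr
      exact hf0 r hr d hdD

/-- The type of a data value. -/
def ty (N : ℕ) (f : ℕ → Finset ℕ) (d : ℕ) : Set (Fin N) := {r | d ∈ f r}

/-- Number of data values of each type. -/
noncomputable def cnt (N : ℕ) (f : ℕ → Finset ℕ) (S : Set (Fin N)) : ℕ∞ :=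
  {d | ty N f d = S}.encard

theorem emb_of_cnt {N : ℕ} {f f' : ℕ → Finset ℕ} (h : cnt N f ≤ cnt N f') : Emb N f f' := by
  intro D
  have key : ∀ S : Set (Fin N), ∃ τ : ℕ → ℕ, ({d | d ∈ D ∧ ty N f d = S} ⊆ τ ⁻¹' {d | ty N f' d = S}) ∧
      Set.InjOn τ {d | d ∈ D ∧ ty N f d = S} := by
    intro S
    have hfin : {d | d ∈ D ∧ ty N f d = S}.Finite := D.finite_toSet.subset fun d hd => hd.1
    refine hfin.exists_injOn_of_encard_le ?_
    exact (Set.encard_le_encard fun d hd => hd.2).trans (h S)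
  choose τ h1 h2 using key
  have h3 : ∀ d ∈ D, ty N f' (τ (ty N f d) d) = ty N f d := fun d hd => h1 (ty N f d) ⟨hd, rfl⟩
  refine ⟨fun d => τ (ty N f d) d, ?_, ?_⟩
  · intro d hd e he hde
    simp only at hde
    have hT : ty N f d = ty N f e := by
      rw [← h3 d hd, ← h3 e he, hde]
    rw [← hT] at hde
    exact h2 (ty N f d) ⟨hd, rfl⟩ ⟨he, hT.symm⟩ hde
  · intro d hd r hr
    have := Set.ext_iff.1 (h3 d hd) ⟨r, hr⟩
    exact this.symm

/-- Stability at level `n`. -/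
def Stab (A : CRsA k) (n : ℕ) : Prop :=
  ∀ q < A.nQ, ∀ f, Acc A (fun _ => True) (n + 1) (q, f) → Acc A (fun _ => True) n (q, f)

theorem exists_stab {A : CRsA k} (hA : A.WellFormed) : ∃ n, Stab A n := by
  by_contra hcon
  simp only [Stab, not_exists, not_forall] at hcon
  choose q hq f h1 h2 using hcon
  have w1 : WellQuasiOrdered (fun a b : Fin A.nQ => a = b) := Finite.wellQuasiOrdered _
  have w2 : WellQuasiOrdered (fun a b : Set (Fin A.nR) → ℕ∞ => a ≤ b) := by
    exact wellQuasiOrdered_le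
  obtain ⟨i, j, hij, hqq, hc⟩ := w1.prod w2 (fun n => (⟨q n, hq n⟩, cnt A.nR (f n)))
  simp only [Fin.mk.injEq] at hqq hc
  apply h2 j
  rw [← hqq]
  exact ((h1 i).le hij).emb hA (emb_of_cnt hc)

/-- The finitary stability check. -/
def FinStab (A : CRsA k) (n : ℕ) : Prop :=
  ∀ q < A.nQ, ∀ f : ℕ → Finset ℕ, (∀ r, f r ⊆ Finset.range (n + 1)) → (∀ r, A.nR ≤ r → f r = ∅) →
    Acc A (fun d => d < 2 * n + 2) (n + 1) (q, f) → Acc A (fun d => d < 2 * n + 2) n (q, f)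

theorem finStab_iff {A : CRsA k} (hA : A.WellFormed) (n : ℕ) : FinStab A n ↔ Stab A n := by
  constructor
  · intro h q hq f hf
    obtain ⟨f0, g1, g2, g3, g4⟩ := hf.small hA
    exact ((h q hq f0 g1 g2 (g4.bounded hA (fun r _ => g1 r) (by omega))).mono
      (fun _ _ => trivial)).emb hA g3
  · intro h q hq f g1 g2 hf
    exact (h q hq f (hf.mono (fun _ _ => trivial))).bounded hA (fun r _ => g1 r) (by omega)

theorem Stab.acc {A : CRsA k} (hA : A.WellFormed) {n : ℕ} (h : Stab A n) (m : ℕ) :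
    ∀ q < A.nQ, ∀ f, Acc A (fun _ => True) m (q, f) → Acc A (fun _ => True) n (q, f) := by
  induction m with
  | zero => intro q _ f hf; exact hf.le (Nat.zero_le _)
  | succ m ih =>
    rintro q hq f (hf | ⟨x, ⟨q', f'⟩, hx, hs, hc⟩)
    · exact ih q hq f hf
    · refine h q hq f (Or.inr ⟨x, _, hx, hs, ih q' ?_ f' hc⟩)
      obtain ⟨t, ht, _, _, _, _, he⟩ := hs
      rw [Prod.mk.injEq] at he
      rw [he.1]
      exact (hA.2.2 t ht).2.1

theorem acc_of_run {A : CRsA k} {c c' : Cfg} {w : DataWord k} (h : A.Run c w c')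
    (hF : c'.1 ∈ A.F) : Acc A (fun _ => True) w.length c := by
  induction h with
  | nil c => exact hF
  | cons hs _ ih => exact Or.inr ⟨_, _, trivial, hs, ih hF⟩

theorem run_of_acc {A : CRsA k} {P : ℕ → Prop} {n : ℕ} : ∀ {c : Cfg}, Acc A P n c →
    ∃ w c', A.Run c w c' ∧ c'.1 ∈ A.F := by
  induction n with
  | zero => intro c h; exact ⟨[], c, .nil c, h⟩
  | succ n ih =>
    rintro c (h | ⟨x, c', _, hs, h⟩)
    · exact ih h
    · obtain ⟨w, c'', hr, hF⟩ := ih h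
      exact ⟨x :: w, c'', .cons hs hr, hF⟩

/-- Acceptance from an initial configuration. -/
def InitAcc (A : CRsA k) (n : ℕ) : Prop :=
  ∃ q ∈ A.I, Acc A (fun d => d < n) n (q, fun _ => ∅)

theorem lang_nonempty_iff {A : CRsA k} (hA : A.WellFormed) :
    A.Lang ≠ ∅ ↔ ∃ n, InitAcc A n := by
  rw [← Set.nonempty_iff_ne_empty]
  constructor
  · rintro ⟨w, q, hq, c, hr, hF⟩
    exact ⟨w.length, q, hq, (acc_of_run hr hF).bounded hA (m := 0) (by simp) (by omega)⟩
  · rintro ⟨n, q, hq, h⟩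
    obtain ⟨w, c', hr, hF⟩ := run_of_acc h
    exact ⟨w, q, hq, c', hr, hF⟩

theorem lang_empty_iff {A : CRsA k} (hA : A.WellFormed) :
    A.Lang = ∅ ↔ ∃ n, FinStab A n ∧ ¬ InitAcc A n := by
  constructor
  · intro h
    obtain ⟨n, hn⟩ := exists_stab hA
    exact ⟨n, (finStab_iff hA n).2 hn, fun hI => (lang_nonempty_iff hA).2 ⟨n, hI⟩ h⟩
  · rintro ⟨n, hn, hI⟩
    by_contra hne
    obtain ⟨m, q, hq, hm⟩ := (lang_nonempty_iff hA).1 hne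
    exact hI ⟨q, hq, (((finStab_iff hA n).1 hn).acc hA m q (hA.1 q hq) _
      (hm.mono fun _ _ => trivial)).bounded hA (m := 0) (by simp) (by omega)⟩

/-! ### Concrete computation -/

/-- The assignment described by a list of pairs (register, data value). -/
def asg (l : List (ℕ × ℕ)) : ℕ → Finset ℕ :=
  fun r => ((l.filter (fun p => p.1 = r)).map Prod.snd).toFinset

theorem mem_asg (l : List (ℕ × ℕ)) (r d : ℕ) : d ∈ asg l r ↔ (r, d) ∈ l := by
  simp [asg]

/-- Update on lists. -/
def updL (N : ℕ) (t : CTrans k) (l : List (ℕ × ℕ)) (d : ℕ) : List (ℕ × ℕ) :=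
  (List.range N).flatMap fun r => (t.upd.getD r []).flatMap fun o =>
    Option.casesOn o [(r, d)] fun r' => l.flatMap fun p => if p.1 = r' then [(r, p.2)] else []

theorem asg_updL {N : ℕ} {t : CTrans k} (ht : t.upd.length = N) (l : List (ℕ × ℕ)) (d : ℕ) :
    asg (updL N t l d) = t.apply (asg l) d := by
  funext r
  ext e
  rw [mem_asg, mem_apply]
  simp only [updL, List.mem_flatMap, List.mem_range]
  constructor
  · rintro ⟨r₀, hr₀, o, ho, h⟩
    rcases o with _ | r'
    · simp only [List.mem_singleton, Prod.mk.injEq] at h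
      obtain ⟨rfl, rfl⟩ := h
      exact ⟨none, ho, Or.inl ⟨rfl, rfl⟩⟩
    · simp only [List.mem_flatMap] at h
      obtain ⟨⟨p1, p2⟩, hp, h⟩ := h
      split_ifs at h with hh
      · simp only [List.mem_singleton, Prod.mk.injEq] at h
        obtain ⟨rfl, rfl⟩ := h
        simp only at hh
        subst hh
        exact ⟨some p1, ho, Or.inr ⟨p1, rfl, (mem_asg _ _ _).2 hp⟩⟩
      · simp at h
  · rintro ⟨o, ho, h⟩
    have hr : r < N := by
      by_contra hr
      rw [List.getD_eq_default _ _ (by omega)] at ho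
      simp at ho
    refine ⟨r, hr, o, ho, ?_⟩
    rcases h with ⟨rfl, rfl⟩ | ⟨r', rfl, h⟩
    · simp
    · simp only [List.mem_flatMap]
      exact ⟨(r', e), (mem_asg _ _ _).1 h, by simp⟩

/-- The guard test, on lists. -/
def Guard (t : CTrans k) (q : ℕ) (l : List (ℕ × ℕ)) (d : ℕ) : Prop :=
  t.src = q ∧ (∀ r ∈ t.gIn, (r, d) ∈ l) ∧ (∀ r ∈ t.gNin, ¬ (r, d) ∈ l)

instance (t : CTrans k) (q : ℕ) (l : List (ℕ × ℕ)) (d : ℕ) : Decidable (Guard t q l d) := by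
  unfold Guard; infer_instance

/-- Successor configurations. -/
def succs (A : CRsA k) (N : ℕ) (c : ℕ × List (ℕ × ℕ)) : List (ℕ × List (ℕ × ℕ)) :=
  A.trans.flatMap fun t => (List.range N).flatMap fun d =>
    if Guard t c.1 c.2 d then [(t.tgt, updL A.nR t c.2 d)] else []

theorem mem_succs (A : CRsA k) (N : ℕ) (c c' : ℕ × List (ℕ × ℕ)) : c' ∈ succs A N c ↔
    ∃ t ∈ A.trans, ∃ d < N, Guard t c.1 c.2 d ∧ c' = (t.tgt, updL A.nR t c.2 d) := by
  simp only [succs, List.mem_flatMap, List.mem_range]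
  refine exists_congr fun t => and_congr_right fun _ => exists_congr fun d =>
    and_congr_right fun _ => ?_
  split_ifs with h <;> simp [h]

/-- One layer of exploration. -/
def layer (A : CRsA k) (N : ℕ) (cs : List (ℕ × List (ℕ × ℕ))) : List (ℕ × List (ℕ × ℕ)) :=
  cs ++ cs.flatMap (succs A N)

theorem layer_iff {A : CRsA k} (hA : A.WellFormed) (N n : ℕ) :
    ∀ cs : List (ℕ × List (ℕ × ℕ)), (∃ c ∈ (layer A N)^[n] cs, c.1 ∈ A.F) ↔
      ∃ c ∈ cs, Acc A (fun d => d < N) n (c.1, asg c.2) := by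
  induction n with
  | zero => intro cs; rfl
  | succ n ih =>
    intro cs
    rw [Function.iterate_succ_apply, ih]
    simp only [layer, List.mem_append, List.mem_flatMap]
    constructor
    · rintro ⟨c, hc | ⟨c₀, hc₀, hc⟩, h⟩
      · exact ⟨c, hc, Or.inl h⟩
      · obtain ⟨t, ht, d, hd, ⟨g1, g2, g3⟩, rfl⟩ := (mem_succs _ _ _ _).1 hc
        refine ⟨c₀, hc₀, Or.inr ⟨(t.letter, d), _, hd, ⟨t, ht, g1, rfl, ?_, ?_, rfl⟩, ?_⟩⟩
        · exact fun r hr => (mem_asg _ _ _).2 (g2 r hr)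
        · exact fun r hr h => g3 r hr ((mem_asg _ _ _).1 h)
        · rw [asg_updL (hA.2.2 t ht).2.2.2.2.2.1] at h
          exact h
    · rintro ⟨c, hc, h | ⟨⟨a, d⟩, c', hd, ⟨t, ht, g1, g2, g3, g4, rfl⟩, h⟩⟩
      · exact ⟨c, Or.inl hc, h⟩
      · refine ⟨(t.tgt, updL A.nR t c.2 d), Or.inr ⟨c, hc, (mem_succs _ _ _ _).2
          ⟨t, ht, d, hd, ⟨g1, ?_, ?_⟩, rfl⟩⟩, ?_⟩
        · exact fun r hr => (mem_asg _ _ _).1 (g3 r hr)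
        · exact fun r hr h => g4 r hr ((mem_asg _ _ _).2 h)
        · rw [asg_updL (hA.2.2 t ht).2.2.2.2.2.1]
          exact h

/-- Bounded acceptance, on lists. -/
def AccL (A : CRsA k) (N n q : ℕ) (l : List (ℕ × ℕ)) : Prop :=
  ∃ c ∈ (layer A N)^[n] [(q, l)], c.1 ∈ A.F

theorem accL_iff {A : CRsA k} (hA : A.WellFormed) (N n q : ℕ) (l : List (ℕ × ℕ)) :
    AccL A N n q l ↔ Acc A (fun d => d < N) n (q, asg l) := by
  unfold AccL
  rw [layer_iff hA]
  simp

/-- All sublists. -/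
def subs (l : List (ℕ × ℕ)) : List (List (ℕ × ℕ)) :=
  l.foldr (fun a ss => ss ++ ss.map (fun s => a :: s)) [[]]

theorem subset_of_mem_subs (l : List (ℕ × ℕ)) : ∀ s ∈ subs l, s ⊆ l := by
  induction l with
  | nil => intro s hs; simp [subs] at hs; simp [hs]
  | cons a l ih =>
    intro s hs
    change s ∈ subs l ++ (subs l).map (fun s => a :: s) at hs
    rw [List.mem_append, List.mem_map] at hs
    rcases hs with hs | ⟨s', hs', rfl⟩
    · exact fun x hx => List.mem_cons_of_mem _ (ih s hs hx)
    · exact List.cons_subset_cons a (ih s' hs')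

theorem filter_mem_subs (p : ℕ × ℕ → Bool) (l : List (ℕ × ℕ)) : l.filter p ∈ subs l := by
  induction l with
  | nil => simp [subs]
  | cons a l ih =>
    change _ ∈ subs l ++ (subs l).map (fun s => a :: s)
    rw [List.mem_append, List.mem_map]
    by_cases h : p a
    · exact Or.inr ⟨_, ih, by simp [h]⟩
    · left; simpa [h] using ih

/-- Rectangular grid. -/
def grid (a b : ℕ) : List (ℕ × ℕ) :=
  (List.range a).flatMap fun r => (List.range b).map fun d => (r, d)

theorem mem_grid (a b : ℕ) (p : ℕ × ℕ) : p ∈ grid a b ↔ p.1 < a ∧ p.2 < b := by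
  obtain ⟨r, d⟩ := p
  simp [grid]

/-- The stability check on lists. -/
def StabL (A : CRsA k) (n : ℕ) : Prop :=
  ∀ q ∈ List.range A.nQ, ∀ l ∈ subs (grid A.nR (n + 1)),
    ¬ AccL A (2 * n + 2) (n + 1) q l ∨ AccL A (2 * n + 2) n q l

theorem stabL_iff {A : CRsA k} (hA : A.WellFormed) (n : ℕ) : StabL A n ↔ FinStab A n := by
  simp only [StabL, accL_iff hA, ← imp_iff_not_or, List.mem_range, FinStab]
  refine forall_congr' fun q => imp_congr_right fun _ => ?_
  constructor
  · intro h f h1 h2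
    have := h _ (filter_mem_subs (fun p => p.2 ∈ f p.1) (grid A.nR (n + 1)))
    have he : asg ((grid A.nR (n + 1)).filter (fun p => p.2 ∈ f p.1)) = f := by
      funext r
      ext d
      rw [mem_asg, List.mem_filter, mem_grid]
      simp only [decide_eq_true_eq, and_iff_right_iff_imp]
      intro hd
      refine ⟨?_, by simpa using h1 r hd⟩
      by_contra hr
      rw [h2 r (by omega)] at hd
      simp at hd
    rwa [he] at this
  · intro h l hl
    refine h (asg l) ?_ ?_
    · intro r d hd
      have := (mem_grid _ _ _).1 (subset_of_mem_subs _ l hl ((mem_asg _ _ _).1 hd))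
      simpa using this.2
    · intro r hr
      refine Finset.eq_empty_of_forall_notMem fun d hd => ?_
      have := (mem_grid _ _ _).1 (subset_of_mem_subs _ l hl ((mem_asg _ _ _).1 hd))
      simp only at this
      omega

/-- Acceptance of an initial configuration on lists. -/
def InitL (A : CRsA k) (n : ℕ) : Prop := ∃ q ∈ A.I, AccL A n n q []

theorem initL_iff {A : CRsA k} (hA : A.WellFormed) (n : ℕ) : InitL A n ↔ InitAcc A n := by
  simp only [InitL, InitAcc, accL_iff hA]
  rfl

/-! ### Primitive recursiveness -/

section Prim

variable {α β : Type*} [Primcodable α] [Primcodable β]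

theorem pr_forall {f : α → List β} {R : α → β → Prop} (hf : Primrec f)
    (hR : PrimrecPred fun p : α × β => R p.1 p.2) : PrimrecPred fun a => ∀ b ∈ f a, R a b := by
  have h : PrimrecRel fun (b : β) (a : α) => R a b := hR.comp (Primrec.snd.pair Primrec.fst)
  exact h.forall_mem_list.comp hf Primrec.id

theorem pr_exists {f : α → List β} {R : α → β → Prop} (hf : Primrec f)
    (hR : PrimrecPred fun p : α × β => R p.1 p.2) : PrimrecPred fun a => ∃ b ∈ f a, R a b := by
  have h : PrimrecRel fun (b : β) (a : α) => R a b := hR.comp (Primrec.snd.pair Primrec.fst)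
  exact h.exists_mem_list.comp hf Primrec.id

theorem pr_eq {f g : α → β} (hf : Primrec f) (hg : Primrec g) : PrimrecPred fun a => f a = g a := by
  classical
  exact Primrec.eq.comp hf hg

theorem pr_lt {f g : α → ℕ} (hf : Primrec f) (hg : Primrec g) : PrimrecPred fun a => f a < g a :=
  PrimrecPred.comp Primrec.nat_lt (hf.pair hg)

theorem pr_mem {f : α → List β} {g : α → β} (hf : Primrec f) (hg : Primrec g) :
    PrimrecPred fun a => g a ∈ f a :=
  (pr_exists (R := fun a b => b = g a) hf
    (pr_eq Primrec.snd (hg.comp Primrec.fst))).of_eq fun a => by simp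

theorem pr_flatMap {γ : Type*} [Primcodable γ] {f : α → List β} {g : α → β → List γ}
    (hf : Primrec f) (hg : Primrec fun p : α × β => g p.1 p.2) :
    Primrec fun a => (f a).flatMap (g a) := Primrec.list_flatMap hf hg

end Prim

theorem pr_t : Primrec fun t : CTrans k => (t.src, t.letter, t.gIn, t.gNin, t.upd, t.tgt) :=
  Primrec.of_equiv (α := ℕ × Fin k × List ℕ × List ℕ × List (List (Option ℕ)) × ℕ)

theorem pr_A : Primrec fun A : CRsA k => (A.nQ, A.nR, A.trans, A.I, A.F) :=
  Primrec.of_equiv (α := ℕ × ℕ × List (CTrans k) × List ℕ × List ℕ)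

open Primrec in
theorem pr_src : Primrec (CTrans.src (k := k)) := fst.comp pr_t
open Primrec in
theorem pr_gIn : Primrec (CTrans.gIn (k := k)) := (fst.comp (snd.comp snd)).comp pr_t
open Primrec in
theorem pr_gNin : Primrec (CTrans.gNin (k := k)) := (fst.comp (snd.comp (snd.comp snd))).comp pr_t
open Primrec in
theorem pr_upd : Primrec (CTrans.upd (k := k)) :=
  (fst.comp (snd.comp (snd.comp (snd.comp snd)))).comp pr_t
open Primrec in
theorem pr_tgt : Primrec (CTrans.tgt (k := k)) :=
  (snd.comp (snd.comp (snd.comp (snd.comp snd)))).comp pr_t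
open Primrec in
theorem pr_nQ : Primrec (CRsA.nQ (k := k)) := fst.comp pr_A
open Primrec in
theorem pr_nR : Primrec (CRsA.nR (k := k)) := (fst.comp snd).comp pr_A
open Primrec in
theorem pr_trans : Primrec (CRsA.trans (k := k)) := (fst.comp (snd.comp snd)).comp pr_A
open Primrec in
theorem pr_I : Primrec (CRsA.I (k := k)) := (fst.comp (snd.comp (snd.comp snd))).comp pr_A
open Primrec in
theorem pr_F : Primrec (CRsA.F (k := k)) := (snd.comp (snd.comp (snd.comp snd))).comp pr_A

open Primrec in
theorem pr_wf : PrimrecPred fun A : CRsA k => A.WellFormed := by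
  unfold CRsA.WellFormed
  refine (pr_forall pr_I (pr_lt snd (pr_nQ.comp fst))).and
    ((pr_forall pr_F (pr_lt snd (pr_nQ.comp fst))).and (pr_forall pr_trans ?_))
  refine (pr_lt (pr_src.comp snd) (pr_nQ.comp fst)).and ((pr_lt (pr_tgt.comp snd) (pr_nQ.comp fst)).and
    ((pr_forall (pr_gIn.comp snd) (pr_lt snd (pr_nR.comp (fst.comp fst)))).and
    ((pr_forall (pr_gNin.comp snd) (pr_lt snd (pr_nR.comp (fst.comp fst)))).and
    ((pr_forall (pr_gIn.comp snd) (pr_mem (pr_gNin.comp (snd.comp fst)) snd).not).and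
    ((pr_eq (list_length.comp (pr_upd.comp snd)) (pr_nR.comp fst)).and
    (pr_forall (pr_upd.comp snd) ?_))))))
  have h : PrimrecPred fun a : ((CRsA k × CTrans k) × List (Option ℕ)) =>
      ∀ o ∈ a.2, o.getD 0 < a.1.1.nR ∨ o = none :=
    pr_forall snd ((pr_lt (option_getD.comp snd (Primrec.const 0))
      (pr_nR.comp (fst.comp (fst.comp fst)))).or (pr_eq snd (Primrec.const none)))
  refine h.of_eq fun a => ?_
  constructor
  · intro h r hr
    simpa using h _ hr
  · rintro h (_ | r) hr
    · exact Or.inr rfl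
    · exact Or.inl (h r hr)

open Primrec in
theorem pr_updL : Primrec fun p : (ℕ × CTrans k) × List (ℕ × ℕ) × ℕ =>
    updL p.1.1 p.1.2 p.2.1 p.2.2 := by
  unfold updL
  refine pr_flatMap (list_range.comp (fst.comp fst)) ?_
  refine pr_flatMap ((list_getD []).comp (pr_upd.comp (snd.comp (fst.comp fst))) snd) ?_
  refine option_casesOn snd ?_ ?_
  · exact list_cons.comp (pair (snd.comp fst) (snd.comp (snd.comp (fst.comp fst)))) (Primrec.const [])
  · refine pr_flatMap (fst.comp (snd.comp (fst.comp (fst.comp fst)))) ?_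
    refine Primrec.ite (pr_eq (fst.comp snd) (snd.comp fst)) ?_ (Primrec.const [])
    exact list_cons.comp (pair (snd.comp (fst.comp (fst.comp fst))) (snd.comp snd)) (Primrec.const [])

theorem pr_updL' {α : Type*} [Primcodable α] {N d : α → ℕ} {t : α → CTrans k} {l : α → List (ℕ × ℕ)}
    (hN : Primrec N) (ht : Primrec t) (hl : Primrec l) (hd : Primrec d) :
    Primrec fun a => updL (N a) (t a) (l a) (d a) := by
  have h := pr_updL.comp ((hN.pair ht).pair (hl.pair hd))
  exact h

open Primrec in
theorem pr_guard : PrimrecPred fun p : (CTrans k × ℕ) × List (ℕ × ℕ) × ℕ =>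
    Guard p.1.1 p.1.2 p.2.1 p.2.2 := by
  unfold Guard
  refine (pr_eq (pr_src.comp (fst.comp fst)) (snd.comp fst)).and ((pr_forall (pr_gIn.comp (fst.comp fst))
    ?_).and (pr_forall (pr_gNin.comp (fst.comp fst)) (PrimrecPred.not ?_)))
  · exact pr_mem (fst.comp (snd.comp fst)) (pair snd (snd.comp (snd.comp fst)))
  · exact pr_mem (fst.comp (snd.comp fst)) (pair snd (snd.comp (snd.comp fst)))

theorem pr_guard' {α : Type*} [Primcodable α] {q d : α → ℕ} {t : α → CTrans k} {l : α → List (ℕ × ℕ)}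
    (ht : Primrec t) (hq : Primrec q) (hl : Primrec l) (hd : Primrec d) :
    PrimrecPred fun a => Guard (t a) (q a) (l a) (d a) := by
  have h := pr_guard.comp ((ht.pair hq).pair (hl.pair hd))
  exact h

open Primrec in
theorem pr_succs : Primrec fun p : (CRsA k × ℕ) × (ℕ × List (ℕ × ℕ)) =>
    succs p.1.1 p.1.2 p.2 := by
  unfold succs
  refine pr_flatMap (pr_trans.comp (fst.comp fst)) ?_
  refine pr_flatMap (list_range.comp (snd.comp (fst.comp fst))) ?_
  refine Primrec.ite ?_ (list_cons.comp (pair (pr_tgt.comp (snd.comp fst)) ?_) (Primrec.const []))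
    (Primrec.const [])
  · exact pr_guard' (snd.comp fst) (fst.comp (snd.comp (fst.comp fst)))
      (snd.comp (snd.comp (fst.comp fst))) snd
  · exact pr_updL' (pr_nR.comp (fst.comp (fst.comp (fst.comp fst)))) (snd.comp fst)
      (snd.comp (snd.comp (fst.comp fst))) snd

theorem pr_succs' {α : Type*} [Primcodable α] {A : α → CRsA k} {N : α → ℕ}
    {c : α → ℕ × List (ℕ × ℕ)} (hA : Primrec A) (hN : Primrec N) (hc : Primrec c) :
    Primrec fun a => succs (A a) (N a) (c a) := by
  have h := pr_succs.comp ((hA.pair hN).pair hc)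
  exact h

open Primrec in
theorem pr_layer : Primrec fun p : (CRsA k × ℕ) × List (ℕ × List (ℕ × ℕ)) =>
    layer p.1.1 p.1.2 p.2 := by
  unfold layer
  refine list_append.comp snd (pr_flatMap snd ?_)
  exact pr_succs' (fst.comp (fst.comp fst)) (snd.comp (fst.comp fst)) snd

theorem pr_layer' {α : Type*} [Primcodable α] {A : α → CRsA k} {N : α → ℕ}
    {c : α → List (ℕ × List (ℕ × ℕ))} (hA : Primrec A) (hN : Primrec N) (hc : Primrec c) :
    Primrec fun a => layer (A a) (N a) (c a) := by
  have h := pr_layer.comp ((hA.pair hN).pair hc)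
  exact h

open Primrec in
theorem pr_accL : PrimrecPred fun p : (CRsA k × ℕ × ℕ) × ℕ × List (ℕ × ℕ) =>
    AccL p.1.1 p.1.2.1 p.1.2.2 p.2.1 p.2.2 := by
  unfold AccL
  refine pr_exists ?_ (pr_mem (pr_F.comp (fst.comp (fst.comp fst))) (fst.comp snd))
  refine nat_iterate (snd.comp (snd.comp fst)) (list_cons.comp snd (Primrec.const [])) ?_
  exact pr_layer' (fst.comp (fst.comp fst)) (fst.comp (snd.comp (fst.comp fst))) snd

theorem pr_accL' {α : Type*} [Primcodable α] {A : α → CRsA k} {N n q : α → ℕ}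
    {l : α → List (ℕ × ℕ)} (hA : Primrec A) (hN : Primrec N) (hn : Primrec n) (hq : Primrec q)
    (hl : Primrec l) : PrimrecPred fun a => AccL (A a) (N a) (n a) (q a) (l a) := by
  have h := pr_accL.comp ((hA.pair (hN.pair hn)).pair (hq.pair hl))
  exact h

open Primrec in
theorem pr_subs : Primrec subs := by
  unfold subs
  refine list_foldr (h := fun (_ : List (ℕ × ℕ)) (p : (ℕ × ℕ) × List (List (ℕ × ℕ))) =>
    p.2 ++ p.2.map (fun s => p.1 :: s)) Primrec.id
    (Primrec.const [[]]) ?_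
  refine list_append.comp (snd.comp snd) (list_map (snd.comp snd) ?_)
  exact list_cons.comp (fst.comp (snd.comp fst)) snd

open Primrec in
theorem pr_grid : Primrec fun p : ℕ × ℕ => grid p.1 p.2 := by
  unfold grid
  refine pr_flatMap (list_range.comp fst) (list_map (list_range.comp (snd.comp fst)) ?_)
  exact pair (snd.comp fst) snd

open Primrec in
theorem pr_stabL : PrimrecPred fun p : CRsA k × ℕ => StabL p.1 p.2 := by
  unfold StabL
  have hn : Primrec fun p : ((CRsA k × ℕ) × ℕ) × List (ℕ × ℕ) => p.1.1.2 :=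
    snd.comp (fst.comp fst)
  have hA : Primrec fun p : ((CRsA k × ℕ) × ℕ) × List (ℕ × ℕ) => p.1.1.1 :=
    fst.comp (fst.comp fst)
  have h2 : Primrec fun p : ((CRsA k × ℕ) × ℕ) × List (ℕ × ℕ) => 2 * p.1.1.2 + 2 :=
    nat_add.comp (nat_mul.comp (Primrec.const 2) hn) (Primrec.const 2)
  have hg : Primrec fun p : (CRsA k × ℕ) × ℕ => subs (grid p.1.1.nR (p.1.2 + 1)) := by
    have h1 : Primrec fun p : (CRsA k × ℕ) × ℕ => (p.1.1.nR, p.1.2 + 1) :=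
      pair (pr_nR.comp (fst.comp fst)) (succ.comp (snd.comp fst))
    have h := pr_subs.comp (pr_grid.comp h1)
    exact h
  refine pr_forall (list_range.comp (pr_nQ.comp fst)) ?_
  refine pr_forall (f := fun p : (CRsA k × ℕ) × ℕ => subs (grid p.1.1.nR (p.1.2 + 1))) hg ?_
  refine PrimrecPred.or (PrimrecPred.not ?_) ?_
  · exact pr_accL' hA h2 (succ.comp hn) (snd.comp fst) snd
  · exact pr_accL' hA h2 hn (snd.comp fst) snd

open Primrec in
theorem pr_initL : PrimrecPred fun p : CRsA k × ℕ => InitL p.1 p.2 := by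
  unfold InitL
  refine pr_exists (pr_I.comp fst) ?_
  exact pr_accL' (fst.comp fst) (snd.comp fst) (snd.comp fst) snd (Primrec.const [])

theorem re_of_prim {α : Type*} [Primcodable α] {p : α × ℕ → Prop} (h : PrimrecPred p) :
    REPred fun a => ∃ n, p (a, n) := by
  obtain ⟨_, h⟩ := h
  have hc : Computable₂ fun (a : α) (n : ℕ) => decide (p (a, n)) := h.to_comp
  have := (Partrec.rfind hc.partrec₂).dom_re
  refine this.of_eq fun a => ?_
  rw [Nat.rfind_dom]
  simp

theorem main (k : ℕ) : ComputablePred (fun A : CRsA k => A.WellFormed ∧ CRsA.Lang A = ∅) := by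
  rw [ComputablePred.computable_iff_re_compl_re']
  have hwf : PrimrecPred fun p : CRsA k × ℕ => p.1.WellFormed := pr_wf.comp Primrec.fst
  constructor
  · refine (re_of_prim (hwf.and (pr_stabL.and pr_initL.not))).of_eq fun A => ?_
    constructor
    · rintro ⟨n, hA, h1, h2⟩
      refine ⟨hA, (lang_empty_iff hA).2 ⟨n, (stabL_iff hA n).1 h1, ?_⟩⟩
      rwa [← initL_iff hA]
    · rintro ⟨hA, h⟩
      obtain ⟨n, h1, h2⟩ := (lang_empty_iff hA).1 h
      refine ⟨n, hA, (stabL_iff hA n).2 h1, ?_⟩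
      rwa [initL_iff hA]
  · refine (re_of_prim (hwf.not.or pr_initL)).of_eq fun A => ?_
    by_cases hA : A.WellFormed
    · simp only [hA, not_true_eq_false, false_or, true_and, initL_iff hA]
      exact (lang_nonempty_iff hA).symm
    · simp [hA]

end RsAProof

/-- The emptiness problem for register set automata is decidable:
the set of (encodings of) RsAs with empty language is computable. -/
theorem rsa_emptiness_decidable (k : ℕ) :
    ComputablePred (fun A : CRsA (k + 1) => A.WellFormed ∧ CRsA.Lang A = ∅) := by
  exact RsAProof.main (k + 1)
end

section
/- The emptiness problem for register set automata with register equality test is undecidable: there is no computable function that, given (an encoding of) an RsA with register equality test A, decides whether L(A) = ∅. -/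
/-- A transition of a (concretely encoded) register set automaton with register
equality test: `(src, letter, gIn, gNin, gEq, upd, tgt)`.  Guards `gIn`, `gNin` are
lists of registers; `gEq` is a list indexed by register number whose `r`-th entry
lists the registers whose content must equal that of register `r`; the update is
a list indexed by register number, `none` standing for the current input `in` and
`some r` for register `r`. -/
structure CEqTrans (k : ℕ) where
  src : ℕ
  letter : Fin k
  gIn : List ℕ
  gNin : List ℕ
  gEq : List (List ℕ)
  upd : List (List (Option ℕ))
  tgt : ℕ

instance (k : ℕ) : Primcodable (CEqTrans k) :=
  Primcodable.ofEquiv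
    (ℕ × Fin k × List ℕ × List ℕ × List (List ℕ) × List (List (Option ℕ)) × ℕ)
    { toFun := fun t => (t.src, t.letter, t.gIn, t.gNin, t.gEq, t.upd, t.tgt)
      invFun := fun p =>
        ⟨p.1, p.2.1, p.2.2.1, p.2.2.2.1, p.2.2.2.2.1, p.2.2.2.2.2.1, p.2.2.2.2.2.2⟩
      left_inv := fun _ => rfl
      right_inv := fun _ => rfl }

/-- A (concretely encoded) register set automaton with register equality test, whose
states are `0, …, nQ - 1` and registers are `0, …, nR - 1` (initial segments of `ℕ`). -/
structure CRsAEq (k : ℕ) where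
  nQ : ℕ
  nR : ℕ
  trans : List (CEqTrans k)
  I : List ℕ
  F : List ℕ

instance (k : ℕ) : Primcodable (CRsAEq k) :=
  Primcodable.ofEquiv (ℕ × ℕ × List (CEqTrans k) × List ℕ × List ℕ)
    { toFun := fun A => (A.nQ, A.nR, A.trans, A.I, A.F)
      invFun := fun p => ⟨p.1, p.2.1, p.2.2.1, p.2.2.2.1, p.2.2.2.2⟩
      left_inv := fun _ => rfl
      right_inv := fun _ => rfl }

/-- The register assignment obtained after taking transition `t` with current input
data value `d`, starting from the assignment `f`. -/
def CEqTrans.apply {k : ℕ} (t : CEqTrans k) (f : ℕ → Finset ℕ) (d : ℕ) :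
    ℕ → Finset ℕ := fun r =>
  ((t.upd.getD r []).map fun o =>
    match o with
    | none => ({d} : Finset ℕ)
    | some r' => f r').foldr (· ∪ ·) ∅

/-- One step of a `CRsAEq` from configuration `c` to configuration `c'`, reading the
letter `x`: besides the membership guards, every register listed in `gEq(r)` must
hold exactly the same set as register `r`. -/
def CRsAEq.Step {k : ℕ} (A : CRsAEq k) (c : ℕ × (ℕ → Finset ℕ)) (x : Fin k × ℕ)
    (c' : ℕ × (ℕ → Finset ℕ)) : Prop :=
  ∃ t ∈ A.trans, t.src = c.1 ∧ t.letter = x.1 ∧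
    (∀ r ∈ t.gIn, x.2 ∈ c.2 r) ∧ (∀ r ∈ t.gNin, x.2 ∉ c.2 r) ∧
    (∀ r : ℕ, ∀ r' ∈ t.gEq.getD r [], c.2 r' = c.2 r) ∧
    c' = (t.tgt, t.apply c.2 x.2)

/-- Runs of a `CRsAEq`. -/
inductive CRsAEq.Run {k : ℕ} (A : CRsAEq k) :
    (ℕ × (ℕ → Finset ℕ)) → DataWord k → (ℕ × (ℕ → Finset ℕ)) → Prop where
  | nil (c : ℕ × (ℕ → Finset ℕ)) : CRsAEq.Run A c [] c
  | cons {c c' c'' : ℕ × (ℕ → Finset ℕ)} {x : Fin k × ℕ} {w : DataWord k} :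
      A.Step c x c' → CRsAEq.Run A c' w c'' → CRsAEq.Run A c (x :: w) c''

/-- The language of a `CRsAEq`. -/
def CRsAEq.Lang {k : ℕ} (A : CRsAEq k) : Set (DataWord k) :=
  { w | ∃ q₀ ∈ A.I, ∃ c : ℕ × (ℕ → Finset ℕ),
      A.Run (q₀, fun _ => ∅) w c ∧ c.1 ∈ A.F }

/-- Well-formedness of a `CRsAEq`: all states and registers mentioned lie in the
respective initial segments, the membership guards of each transition are disjoint,
and the equality guard and the update are functions on the registers. -/
def CRsAEq.WellFormed {k : ℕ} (A : CRsAEq k) : Prop :=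
  (∀ q ∈ A.I, q < A.nQ) ∧ (∀ q ∈ A.F, q < A.nQ) ∧
  ∀ t ∈ A.trans, t.src < A.nQ ∧ t.tgt < A.nQ ∧
    (∀ r ∈ t.gIn, r < A.nR) ∧ (∀ r ∈ t.gNin, r < A.nR) ∧
    (∀ r ∈ t.gIn, r ∉ t.gNin) ∧
    t.gEq.length = A.nR ∧ (∀ l ∈ t.gEq, ∀ r' ∈ l, r' < A.nR) ∧
    t.upd.length = A.nR ∧
    ∀ l ∈ t.upd, ∀ r' : ℕ, some r' ∈ l → r' < A.nR


namespace RsaUndec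

open Relation

/-! ### Regular programs over abstract actions -/

inductive Cmd (α : Type) : Type
  | act (a : α) : Cmd α
  | seq (c d : Cmd α) : Cmd α
  | star (c : Cmd α) : Cmd α

def Cmd.sem {α X : Type} (step : α → X → X → Prop) : Cmd α → X → X → Prop
  | .act a => step a
  | .seq c d => fun x y => ∃ z, c.sem step x z ∧ d.sem step z y
  | .star c => ReflTransGen (c.sem step)

def Cmd.subst {α β : Type} (g : α → Cmd β) : Cmd α → Cmd β
  | .act a => g a
  | .seq c d => .seq (c.subst g) (d.subst g)
  | .star c => .star (c.subst g)

def Cmd.All {α : Type} (p : α → Prop) : Cmd α → Prop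
  | .act a => p a
  | .seq c d => c.All p ∧ d.All p
  | .star c => c.All p

theorem Cmd.All.mono {α : Type} {p q : α → Prop} (h : ∀ a, p a → q a) :
    ∀ {c : Cmd α}, c.All p → c.All q
  | .act a, hc => h a hc
  | .seq _ _, hc => ⟨Cmd.All.mono h hc.1, Cmd.All.mono h hc.2⟩
  | .star c, hc => Cmd.All.mono (c := c) h hc

theorem Cmd.All.subst {α β : Type} {p : α → Prop} {q : β → Prop} {g : α → Cmd β}
    (h : ∀ a, p a → (g a).All q) : ∀ {c : Cmd α}, c.All p → (c.subst g).All q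
  | .act a, hc => h a hc
  | .seq _ _, hc => ⟨Cmd.All.subst h hc.1, Cmd.All.subst h hc.2⟩
  | .star c, hc => Cmd.All.subst (c := c) h hc

section Sim
variable {α β X Y : Type} {sA : α → X → X → Prop} {sB : β → Y → Y → Prop}
  {R : X → Y → Prop} {g : α → Cmd β} {p : α → Prop}

theorem sim_fwd
    (h : ∀ a, p a → ∀ x x' y, sA a x x' → R x y → ∃ y', (g a).sem sB y y' ∧ R x' y') :
    ∀ c : Cmd α, c.All p → ∀ x x' y, c.sem sA x x' → R x y →
      ∃ y', (c.subst g).sem sB y y' ∧ R x' y' := by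
  intro c
  induction c with
  | act a => exact fun hp => h a hp
  | seq c d ihc ihd =>
    rintro ⟨hc, hd⟩ x x' y ⟨z, h1, h2⟩ hR
    obtain ⟨u, hu, hRu⟩ := ihc hc _ _ _ h1 hR
    obtain ⟨v, hv, hRv⟩ := ihd hd _ _ _ h2 hRu
    exact ⟨v, ⟨u, hu, hv⟩, hRv⟩
  | star c ih =>
    intro hc x x' y hs hR
    simp only [Cmd.sem] at hs
    induction hs with
    | refl => exact ⟨y, ReflTransGen.refl, hR⟩
    | tail _ h2 ih2 =>
      obtain ⟨u, hu, hRu⟩ := ih2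
      obtain ⟨v, hv, hRv⟩ := ih hc _ _ _ h2 hRu
      exact ⟨v, ReflTransGen.tail hu hv, hRv⟩

theorem sim_bwd
    (h : ∀ a, p a → ∀ x y y', (g a).sem sB y y' → R x y → ∃ x', sA a x x' ∧ R x' y') :
    ∀ c : Cmd α, c.All p → ∀ x y y', (c.subst g).sem sB y y' → R x y →
      ∃ x', c.sem sA x x' ∧ R x' y' := by
  intro c
  induction c with
  | act a => exact fun hp => h a hp
  | seq c d ihc ihd =>
    rintro ⟨hc, hd⟩ x y y' ⟨z, h1, h2⟩ hR
    obtain ⟨u, hu, hRu⟩ := ihc hc _ _ _ h1 hR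
    obtain ⟨v, hv, hRv⟩ := ihd hd _ _ _ h2 hRu
    exact ⟨v, ⟨u, hu, hv⟩, hRv⟩
  | star c ih =>
    intro hc x y y' hs hR
    simp only [Cmd.sem, Cmd.subst] at hs
    induction hs with
    | refl => exact ⟨x, ReflTransGen.refl, hR⟩
    | tail _ h2 ih2 =>
      obtain ⟨u, hu, hRu⟩ := ih2
      obtain ⟨v, hv, hRv⟩ := ih hc _ _ _ h2 hRu
      exact ⟨v, ReflTransGen.tail hu hv, hRv⟩

end Sim

/-! ### Finite transition systems -/

def TStep {α X Q : Type} (step : α → X → X → Prop) (D : List (Q × α × Q))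
    (c c' : Q × X) : Prop :=
  ∃ a, (c.1, a, c'.1) ∈ D ∧ step a c.2 c'.2

def Reach {α X Q : Type} (step : α → X → X → Prop) (D : List (Q × α × Q)) :
    Q × X → Q × X → Prop := ReflTransGen (TStep step D)

def mapT {α Q Q' : Type} (j : Q → Q') (t : Q × α × Q) : Q' × α × Q' := (j t.1, t.2.1, j t.2.2)

theorem Reach.map {α X Q Q' : Type} {step : α → X → X → Prop} {D : List (Q × α × Q)}
    {D' : List (Q' × α × Q')} (j : Q → Q') (hj : ∀ t ∈ D, mapT j t ∈ D')
    {c c' : Q × X} (h : Reach step D c c') : Reach step D' (j c.1, c.2) (j c'.1, c'.2) := by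
  induction h with
  | refl => exact ReflTransGen.refl
  | tail _ h2 ih =>
    obtain ⟨a, ha, hs⟩ := h2
    exact ReflTransGen.tail ih ⟨a, hj _ ha, hs⟩

theorem thompson {α X : Type} (step : α → X → X → Prop) (eps : α)
    (heps : ∀ x y, step eps x y ↔ y = x) (p : α → Prop) (hpe : p eps) (c : Cmd α)
    (hc : c.All p) :
    ∃ (Q : Type) (_ : Fintype Q) (D : List (Q × α × Q)) (s t : Q),
      (∀ tr ∈ D, p tr.2.1) ∧ ∀ x y, c.sem step x y ↔ Reach step D (s, x) (t, y) := by
  induction c with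
  | act a =>
    refine ⟨Bool, inferInstance, [(false, a, true)], false, true, ?_, ?_⟩
    · simpa [Cmd.All] using hc
    · intro x y
      constructor
      · intro h
        exact ReflTransGen.single ⟨a, by simp, h⟩
      · intro h
        have key : ∀ c', Reach step [(false, a, true)] (false, x) c' →
            (c' = (false, x) ∨ (c'.1 = true ∧ step a x c'.2)) := by
          intro c' h
          induction h with
          | refl => left; rfl
          | tail _ h2 ih =>
            rename_i u v _
            obtain ⟨b, hb, hs⟩ := h2
            simp only [List.mem_singleton, Prod.mk.injEq] at hb
            obtain ⟨h1, rfl, h3⟩ := hb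
            rcases ih with rfl | ⟨h4, _⟩
            · exact Or.inr ⟨h3, hs⟩
            · rw [h1] at h4; cases h4
        rcases key _ h with h | h
        · cases h
        · exact h.2
  | seq c d ihc ihd =>
    obtain ⟨Q1, _, D1, s1, t1, hp1, h1⟩ := ihc hc.1
    obtain ⟨Q2, _, D2, s2, t2, hp2, h2⟩ := ihd hc.2
    refine ⟨Q1 ⊕ Q2, inferInstance,
      (Sum.inl t1, eps, Sum.inr s2) :: (D1.map (mapT Sum.inl) ++ D2.map (mapT Sum.inr)),
      Sum.inl s1, Sum.inr t2, ?_, ?_⟩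
    · intro tr htr
      simp only [List.mem_cons, List.mem_append, List.mem_map] at htr
      rcases htr with rfl | ⟨u, hu, rfl⟩ | ⟨u, hu, rfl⟩
      · exact hpe
      · exact hp1 _ hu
      · exact hp2 _ hu
    · intro x y
      constructor
      · rintro ⟨z, hz1, hz2⟩
        have a1 := ((h1 _ _).1 hz1).map
          (D' := (Sum.inl t1, eps, Sum.inr s2) ::
            (D1.map (mapT Sum.inl) ++ D2.map (mapT Sum.inr)))
          Sum.inl (fun t ht => by simp only [List.mem_cons, List.mem_append]; right; left; exact List.mem_map_of_mem ht)
        have a2 := ((h2 _ _).1 hz2).map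
          (D' := (Sum.inl t1, eps, Sum.inr s2) ::
            (D1.map (mapT Sum.inl) ++ D2.map (mapT Sum.inr)))
          Sum.inr (fun t ht => by simp only [List.mem_cons, List.mem_append]; right; right; exact List.mem_map_of_mem ht)
        refine ReflTransGen.trans (ReflTransGen.tail a1 ⟨eps, ?_, ?_⟩) a2
        · simp
        · exact (heps _ _).2 rfl
      · intro h
        have key : ∀ c', Reach step ((Sum.inl t1, eps, Sum.inr s2) ::
            (D1.map (mapT Sum.inl) ++ D2.map (mapT Sum.inr))) (Sum.inl s1, x) c' →
            (∀ q, c'.1 = Sum.inl q → Reach step D1 (s1, x) (q, c'.2)) ∧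
            (∀ q, c'.1 = Sum.inr q →
              ∃ z, Reach step D1 (s1, x) (t1, z) ∧ Reach step D2 (s2, z) (q, c'.2)) := by
          intro c' h
          induction h with
          | refl =>
            refine ⟨?_, ?_⟩
            · intro q hq
              cases hq
              exact ReflTransGen.refl
            · intro q hq
              cases hq
          | tail _ h2 ih =>
            rename_i u v _
            obtain ⟨u1, u2⟩ := u
            obtain ⟨v1, v2⟩ := v
            obtain ⟨b, hb, hs⟩ := h2
            simp only [List.mem_cons, List.mem_append, List.mem_map, Prod.mk.injEq, mapT] at hb
            simp only at ih hs ⊢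
            rcases hb with ⟨rfl, rfl, rfl⟩ | ⟨w, hw, rfl, rfl, rfl⟩ | ⟨w, hw, rfl, rfl, rfl⟩
            · refine ⟨fun q hq => (by cases hq), fun q hq => ?_⟩
              cases hq
              rw [heps] at hs
              subst hs
              exact ⟨_, ih.1 _ rfl, ReflTransGen.refl⟩
            · refine ⟨fun q hq => ?_, fun q hq => by cases hq⟩
              cases hq
              exact ReflTransGen.tail (ih.1 _ rfl) ⟨_, hw, hs⟩
            · refine ⟨fun q hq => (by cases hq), fun q hq => ?_⟩
              cases hq
              obtain ⟨z, hz1, hz2⟩ := ih.2 _ rfl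
              exact ⟨z, hz1, ReflTransGen.tail hz2 ⟨_, hw, hs⟩⟩
        obtain ⟨z, hz1, hz2⟩ := (key _ h).2 _ rfl
        exact ⟨z, (h1 _ _).2 hz1, (h2 _ _).2 hz2⟩
  | star c ih =>
    obtain ⟨Q, _, D, s, t, hp, h1⟩ := ih hc
    refine ⟨Option Q, inferInstance,
      (none, eps, some s) :: (some t, eps, none) :: D.map (mapT some), none, none, ?_, ?_⟩
    · intro tr htr
      simp only [List.mem_cons, List.mem_map] at htr
      rcases htr with rfl | rfl | ⟨u, hu, rfl⟩
      · exact hpe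
      · exact hpe
      · exact hp _ hu
    · intro x y
      constructor
      · intro h
        simp only [Cmd.sem] at h
        induction h with
        | refl => exact ReflTransGen.refl
        | tail _ h2 ih2 =>
          have a1 := ((h1 _ _).1 h2).map
            (D' := (none, eps, some s) :: (some t, eps, none) :: D.map (mapT some))
            some (fun t ht => by simp only [List.mem_cons]; right; right; exact List.mem_map_of_mem ht)
          refine ReflTransGen.tail (ReflTransGen.trans (ReflTransGen.tail ih2 ⟨eps, ?_, ?_⟩) a1)
            ⟨eps, ?_, ?_⟩
          · simp
          · exact (heps _ _).2 rfl
          · simp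
          · exact (heps _ _).2 rfl
      · intro h
        have key : ∀ c', Reach step
            ((none, eps, some s) :: (some t, eps, none) :: D.map (mapT some)) (none, x) c' →
            (c'.1 = none → (Cmd.star c).sem step x c'.2) ∧
            (∀ q, c'.1 = some q →
              ∃ z, (Cmd.star c).sem step x z ∧ Reach step D (s, z) (q, c'.2)) := by
          intro c' h
          induction h with
          | refl => exact ⟨fun _ => ReflTransGen.refl, fun q hq => by cases hq⟩
          | tail _ h2 ih =>
            rename_i u v _
            obtain ⟨u1, u2⟩ := u
            obtain ⟨v1, v2⟩ := v
            obtain ⟨b, hb, hs⟩ := h2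
            simp only [List.mem_cons, List.mem_map, Prod.mk.injEq, mapT] at hb
            simp only at ih hs ⊢
            rcases hb with ⟨rfl, rfl, rfl⟩ | ⟨rfl, rfl, rfl⟩ | ⟨w, hw, rfl, rfl, rfl⟩
            · refine ⟨fun hq => (by cases hq), fun q hq => ?_⟩
              cases hq
              rw [heps] at hs
              subst hs
              exact ⟨_, ih.1 rfl, ReflTransGen.refl⟩
            · refine ⟨fun _ => ?_, fun q hq => by cases hq⟩
              rw [heps] at hs
              subst hs
              obtain ⟨z, hz1, hz2⟩ := ih.2 _ rfl
              exact ReflTransGen.tail hz1 ((h1 _ _).2 hz2)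
            · refine ⟨fun hq => (by cases hq), fun q hq => ?_⟩
              cases hq
              obtain ⟨z, hz1, hz2⟩ := ih.2 _ rfl
              exact ⟨z, hz1, ReflTransGen.tail hz2 ⟨_, hw, hs⟩⟩
        exact (key _ h).1 rfl

theorem thompson_nat {α X : Type} (step : α → X → X → Prop) (eps : α)
    (heps : ∀ x y, step eps x y ↔ y = x) (p : α → Prop) (hpe : p eps) (c : Cmd α)
    (hc : c.All p) :
    ∃ (m : ℕ) (D : List (ℕ × α × ℕ)) (s t : ℕ), s < m ∧ t < m ∧
      (∀ tr ∈ D, tr.1 < m ∧ p tr.2.1 ∧ tr.2.2 < m) ∧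
      ∀ x y, c.sem step x y ↔ Reach step D (s, x) (t, y) := by
  obtain ⟨Q, _, D, s, t, hp, h⟩ := thompson step eps heps p hpe c hc
  let e := Fintype.equivFin Q
  let j : Q → ℕ := fun q => (e q : ℕ)
  have hj : Function.Injective j := fun a b hab => e.injective (Fin.ext hab)
  refine ⟨Fintype.card Q, D.map (mapT j), j s, j t, (e s).2, (e t).2, ?_, ?_⟩
  · intro tr htr
    obtain ⟨u, hu, rfl⟩ := List.mem_map.1 htr
    exact ⟨(e _).2, hp _ hu, (e _).2⟩
  · intro x y
    rw [h]
    constructor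
    · intro h
      exact h.map (c := (s, x)) (c' := (t, y)) j (fun t ht => List.mem_map_of_mem ht)
    · intro h
      have key : ∀ c', Reach step (D.map (mapT j)) (j s, x) c' →
          ∃ q, c'.1 = j q ∧ Reach step D (s, x) (q, c'.2) := by
        intro c' h
        induction h with
        | refl => exact ⟨s, rfl, ReflTransGen.refl⟩
        | tail _ h2 ih =>
          rename_i u v _
          obtain ⟨q, hq, hr⟩ := ih
          obtain ⟨b, hb, hs⟩ := h2
          simp only [List.mem_map, Prod.mk.injEq, mapT] at hb
          obtain ⟨w, hw, h3, rfl, h4⟩ := hb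
          rw [hq] at h3
          have := hj h3
          subst this
          exact ⟨w.2.2, h4.symm, ReflTransGen.tail hr ⟨_, hw, hs⟩⟩
      obtain ⟨q, hq, hr⟩ := key _ h
      have := hj hq
      subst this
      exact hr

/-! ### Counter programs -/

inductive Act : Type
  | inc (r : ℕ)
  | dec (r : ℕ)
  | zer (r : ℕ)

def Act.reg : Act → ℕ
  | .inc r => r
  | .dec r => r
  | .zer r => r

def Act.step : Act → (ℕ → ℕ) → (ℕ → ℕ) → Prop
  | .inc r => fun s s' => s' = Function.update s r (s r + 1)
  | .dec r => fun s s' => 0 < s r ∧ s' = Function.update s r (s r - 1)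
  | .zer r => fun s s' => s r = 0 ∧ s' = s

theorem Cmd.exists_bound : ∀ c : Cmd Act, ∃ N, c.All (fun a => a.reg < N)
  | .act a => ⟨a.reg + 1, Nat.lt_succ_self _⟩
  | .seq c d => by
    obtain ⟨N, hN⟩ := Cmd.exists_bound c
    obtain ⟨M, hM⟩ := Cmd.exists_bound d
    exact ⟨max N M, hN.mono fun a h => lt_of_lt_of_le h (le_max_left _ _),
      hM.mono fun a h => lt_of_lt_of_le h (le_max_right _ _)⟩
  | .star c => Cmd.exists_bound c

/-- `F` is computed by a counter program. -/
def Det (F : (ℕ → ℕ) → (ℕ → ℕ)) : Prop :=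
  ∃ c : Cmd Act, ∀ s s', c.sem Act.step s s' ↔ s' = F s

theorem Det.inc (r : ℕ) : Det (fun s => Function.update s r (s r + 1)) :=
  ⟨.act (.inc r), fun _ _ => Iff.rfl⟩

theorem Det.comp {F G : (ℕ → ℕ) → (ℕ → ℕ)} (hG : Det G) (hF : Det F) :
    Det (fun s => G (F s)) := by
  obtain ⟨c, hc⟩ := hF
  obtain ⟨d, hd⟩ := hG
  exact ⟨.seq c d, fun s s' => by simp [Cmd.sem, hc, hd]⟩

theorem Det.id : Det (fun s => s) := by
  refine ⟨.seq (.act (.inc 0)) (.act (.dec 0)), fun s s' => ?_⟩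
  simp [Cmd.sem, Act.step]

theorem Det.loop {F : (ℕ → ℕ) → (ℕ → ℕ)} (hF : Det F) (x : ℕ) (hx : ∀ s, F s x = s x) :
    Det (fun s => (fun u => F (Function.update u x (u x - 1)))^[s x] s) := by
  obtain ⟨c, hc⟩ := hF
  set H : (ℕ → ℕ) → (ℕ → ℕ) := fun u => F (Function.update u x (u x - 1)) with hH
  have hk : ∀ k s, (H^[k] s) x = s x - k := by
    intro k
    induction k with
    | zero => intro s; rfl
    | succ k ih =>
      intro s
      rw [Function.iterate_succ_apply', hH]
      simp only [hx, Function.update_self]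
      rw [ih]; omega
  refine ⟨.seq (.star (.seq (.act (.dec x)) c)) (.act (.zer x)), fun s s' => ?_⟩
  have hst : ∀ u v, (Cmd.seq (.act (.dec x)) c).sem Act.step u v ↔ 0 < u x ∧ v = H u := by
    intro u v
    simp [Cmd.sem, Act.step, hc, hH, and_assoc]
  have star_iff : ∀ v, (Cmd.star (.seq (.act (.dec x)) c)).sem Act.step s v ↔
      ∃ k ≤ s x, v = H^[k] s := by
    intro v
    constructor
    · intro h
      change ReflTransGen _ _ _ at h
      induction h with
      | refl => exact ⟨0, Nat.zero_le _, rfl⟩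
      | tail _ h2 ih =>
        obtain ⟨k, hk1, rfl⟩ := ih
        obtain ⟨h3, rfl⟩ := (hst _ _).1 h2
        rw [hk] at h3
        exact ⟨k + 1, by omega, (Function.iterate_succ_apply' _ _ _).symm⟩
    · rintro ⟨k, hk1, rfl⟩
      induction k with
      | zero => exact ReflTransGen.refl
      | succ k ih =>
        refine ReflTransGen.tail (ih (by omega)) ((hst _ _).2 ⟨?_, ?_⟩)
        · rw [hk]; omega
        · exact Function.iterate_succ_apply' _ _ _
  constructor
  · rintro ⟨z, h1, h2, rfl⟩
    obtain ⟨k, hk1, rfl⟩ := (star_iff _).1 h1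
    rw [hk] at h2
    have : k = s x := by omega
    rw [this]
  · rintro rfl
    exact ⟨_, (star_iff _).2 ⟨s x, le_rfl, rfl⟩, by rw [hk]; omega, rfl⟩

theorem Det.of_eq {F G : (ℕ → ℕ) → (ℕ → ℕ)} (hF : Det F) (h : ∀ s, F s = G s) : Det G := by
  have : F = G := funext h
  exact this ▸ hF

theorem Det.clear (x : ℕ) : Det (fun s => Function.update s x 0) := by
  refine (Det.id.loop x (fun _ => rfl)).of_eq fun s => ?_
  have : ∀ k, (fun u : ℕ → ℕ => Function.update u x (u x - 1))^[k] s
      = Function.update s x (s x - k) := by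
    intro k
    induction k with
    | zero => simp
    | succ k ih =>
      rw [Function.iterate_succ_apply', ih]
      simp only [Function.update_self, Function.update_idem]
      congr 1
  simp [this]

/-- Add register `x` to registers `y` and `t`, clearing `x`. -/
theorem Det.move2 {x y t : ℕ} (hxy : x ≠ y) (hxt : x ≠ t) (hyt : y ≠ t) :
    Det (fun s => fun r => if r = x then 0 else if r = y then s y + s x
      else if r = t then s t + s x else s r) := by
  refine (((Det.inc t).comp (Det.inc y)).loop x (fun s => ?_)).of_eq fun s => ?_
  · simp [Function.update_apply, hxy, hxt]
  · have : ∀ k, (fun u : ℕ → ℕ => Function.update (Function.update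
        (Function.update u x (u x - 1)) y ((Function.update u x (u x - 1)) y + 1)) t
        ((Function.update (Function.update u x (u x - 1)) y
          ((Function.update u x (u x - 1)) y + 1)) t + 1))^[k] s
        = fun r => if r = x then s x - k else if r = y then s y + k
          else if r = t then s t + k else s r := by
      intro k
      induction k with
      | zero => funext r; simp; grind
      | succ k ih =>
        rw [Function.iterate_succ_apply', ih]
        funext r
        simp only [Function.update_apply]
        grind
    rw [this]
    funext r
    simp

theorem Det.move1 {x y : ℕ} (hxy : x ≠ y) :
    Det (fun s => fun r => if r = x then 0 else if r = y then s y + s x else s r) := by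
  refine ((Det.inc y).loop x (fun s => ?_)).of_eq fun s => ?_
  · simp [hxy]
  · have : ∀ k, (fun u : ℕ → ℕ => Function.update
        (Function.update u x (u x - 1)) y ((Function.update u x (u x - 1)) y + 1))^[k] s
        = fun r => if r = x then s x - k else if r = y then s y + k else s r := by
      intro k
      induction k with
      | zero => funext r; simp; grind
      | succ k ih =>
        rw [Function.iterate_succ_apply', ih]
        funext r
        simp only [Function.update_apply]
        grind
    rw [this]
    funext r
    simp

/-- `y := x`, with scratch register `t`. -/
theorem Det.copy {x y t : ℕ} (hxy : x ≠ y) (hxt : x ≠ t) (hyt : y ≠ t) :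
    Det (fun s => Function.update (Function.update s y (s x)) t 0) := by
  refine ((Det.move1 hxt.symm).comp ((Det.move2 hxy hxt hyt).comp
    ((Det.clear y).comp (Det.clear t)))).of_eq fun s => ?_
  funext r
  simp only [Function.update_apply]
  grind

/-- Function `f` on vectors is computable by counter programs in any register layout. -/
def Good {n : ℕ} (f : List.Vector ℕ n → ℕ) : Prop :=
  ∀ (args : Fin n → ℕ) (out base : ℕ), (∀ i, args i < base) → out < base →
    (∀ i, args i ≠ out) → ∃ F, Det F ∧ ∀ s : ℕ → ℕ,
      F s out = f (List.Vector.ofFn fun i => s (args i)) ∧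
      ∀ r < base, r ≠ out → F s r = s r

theorem Good.get {n : ℕ} (i : Fin n) : Good (fun v : List.Vector ℕ n => v.get i) := by
  intro args out base ha ho hne
  refine ⟨_, Det.copy (x := args i) (y := out) (t := base) (hne i) (ha i).ne ho.ne, fun s => ?_⟩
  refine ⟨?_, fun r hr hro => ?_⟩
  · simp [ho.ne]
  · simp [hr.ne, hro]

theorem Good.succ : Good (fun v : List.Vector ℕ 1 => Nat.succ v.head) := by
  intro args out base ha ho hne
  refine ⟨_, (Det.inc out).comp
    (Det.copy (x := args 0) (y := out) (t := base) (hne 0) (ha 0).ne ho.ne), fun s => ?_⟩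
  refine ⟨?_, fun r hr hro => ?_⟩
  · simp [ho.ne, List.Vector.ofFn]
  · simp [hr.ne, hro]

theorem Good.comp {m n : ℕ} {f : List.Vector ℕ n → ℕ} (g : Fin n → List.Vector ℕ m → ℕ)
    (hf : Good f) (hg : ∀ i, Good (g i)) :
    Good (fun a => f (List.Vector.ofFn fun i => g i a)) := by
  intro args out base ha ho hne
  have key : ∀ j ≤ n, ∃ F, Det F ∧ ∀ s : ℕ → ℕ,
      (∀ i : Fin n, (i : ℕ) < j →
        F s (base + i) = g i (List.Vector.ofFn fun i => s (args i))) ∧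
      ∀ r < base, F s r = s r := by
    intro j
    induction j with
    | zero => exact fun _ => ⟨_, Det.id, fun s => ⟨fun i hi => absurd hi (by omega), fun _ _ => rfl⟩⟩
    | succ j ih =>
      intro hj
      obtain ⟨F, hF, hF2⟩ := ih (by omega)
      obtain ⟨G, hG, hG2⟩ := hg ⟨j, hj⟩ args (base + j) (base + n)
        (fun i => lt_of_lt_of_le (ha i) (by omega)) (by omega)
        (fun i => by have := ha i; omega)
      refine ⟨_, hG.comp hF, fun s => ⟨fun i hi => ?_, fun r hr => ?_⟩⟩
      · by_cases hij : (i : ℕ) = j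
        · have : i = ⟨j, hj⟩ := Fin.ext hij
          subst this
          rw [(hG2 _).1]
          congr 2
          funext i
          exact (hF2 s).2 _ (ha i)
        · rw [(hG2 _).2 _ (by omega) (by omega)]
          exact (hF2 s).1 i (by omega)
      · rw [(hG2 _).2 _ (by omega) (by omega)]
        exact (hF2 s).2 r hr
  obtain ⟨F, hF, hF2⟩ := key n le_rfl
  obtain ⟨G, hG, hG2⟩ := hf (fun i => base + i) out (base + n) (fun i => by omega) (by omega)
    (fun i => by omega)
  refine ⟨_, hG.comp hF, fun s => ⟨?_, fun r hr hro => ?_⟩⟩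
  · rw [(hG2 _).1]
    congr 2
    funext i
    exact (hF2 s).1 i i.2
  · rw [(hG2 _).2 r (by omega) hro, (hF2 s).2 r hr]

theorem Good.zero : Good (fun _ : List.Vector ℕ 0 => 0) := by
  intro args out base ha ho hne
  refine ⟨_, Det.clear out, fun s => ⟨by simp, fun r hr hro => by simp [hro]⟩⟩

theorem Good.prec {n : ℕ} {f : List.Vector ℕ n → ℕ} {g : List.Vector ℕ (n + 2) → ℕ}
    (hf : Good f) (hg : Good g) :
    Good (fun v : List.Vector ℕ (n + 1) =>
      v.head.rec (f v.tail) fun y IH => g (y ::ᵥ IH ::ᵥ v.tail)) := by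
  intro args out base ha ho hne
  -- counter `base`, index `base+1`, accumulator `base+2`, result `base+3`, scratch `base+4`
  obtain ⟨F, hF, hF2⟩ := hf (fun i => args i.succ) (base + 2) (base + 5)
    (fun i => by have := ha i.succ; omega) (by omega) (fun i => by have := ha i.succ; omega)
  obtain ⟨G, hG, hG2⟩ := hg (Fin.cons (base + 1) (Fin.cons (base + 2) fun i => args i.succ))
    (base + 3) (base + 5)
    (fun i => by
      refine Fin.cases ?_ (fun i => Fin.cases ?_ (fun i => ?_) i) i
      · simp
      · simp
      · have := ha i.succ; simp; omega)
    (by omega)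
    (fun i => by
      refine Fin.cases ?_ (fun i => Fin.cases ?_ (fun i => ?_) i) i
      · simp
      · simp
      · have := ha i.succ; simp; omega)
  have hcopy1 : Det (fun s => Function.update (Function.update s base (s (args 0))) (base + 4) 0) :=
    Det.copy (ha 0).ne (by have := ha 0; omega) (by omega)
  have hcopy2 : Det (fun s => Function.update (Function.update s (base + 2) (s (base + 3)))
      (base + 4) 0) := Det.copy (by omega) (by omega) (by omega)
  have hcopy3 : Det (fun s => Function.update (Function.update s out (s (base + 2)))
      (base + 4) 0) := Det.copy (by omega) (by omega) (by omega)
  have hbody := (Det.inc (base + 1)).comp (hcopy2.comp hG)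
  set B : (ℕ → ℕ) → (ℕ → ℕ) := _ with hB
  change Det B at hbody
  have hBx : ∀ s r, B s r = if r = base + 1 then G s (base + 1) + 1
      else if r = base + 4 then 0 else if r = base + 2 then G s (base + 3) else G s r := by
    intro s r
    simp only [hB, Function.update_apply]
    grind
  have hloop := hbody.loop base (fun s => by
    rw [hBx]; simp [(hG2 s).2 base (by omega) (by omega)])
  have hstart := hcopy1.comp ((Det.clear (base + 1)).comp hF)
  set P : (ℕ → ℕ) → (ℕ → ℕ) := _ with hP
  change Det P at hstart
  refine ⟨_, hcopy3.comp (hloop.comp hstart), fun s => ?_⟩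
  have hPx : ∀ r, P s r = if r = base + 4 then 0 else if r = base then F s (args 0)
      else if r = base + 1 then 0 else F s r := by
    intro r
    have := ha 0
    simp only [hP, Function.update_apply]
    grind
  have hP0 : P s base = s (args 0) := by
    rw [hPx, if_neg (by omega), if_pos rfl, (hF2 s).2 _ (by have := ha 0; omega) (by have := ha 0; omega)]
  set tl : List.Vector ℕ n := List.Vector.ofFn fun i => s (args i.succ) with htl
  have inv : ∀ k, let u := (fun u => B (Function.update u base (u base - 1)))^[k] (P s)
      u (base + 1) = k ∧ u (base + 2) = Nat.rec (f tl) (fun y IH => g (y ::ᵥ IH ::ᵥ tl)) k ∧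
      ∀ r < base, u r = s r := by
    intro k
    induction k with
    | zero =>
      refine ⟨?_, ?_, ?_⟩
      · simp [hPx]
      · simp only [Function.iterate_zero, _root_.id, hPx]
        simp [(hF2 s).1, htl]
      · intro r hr
        simp only [Function.iterate_zero, _root_.id, hPx]
        rw [if_neg (by omega), if_neg (by omega), if_neg (by omega)]
        exact (hF2 s).2 _ (by omega) (by omega)
    | succ k ih =>
      simp only [Function.iterate_succ_apply']
      set u := (fun u => B (Function.update u base (u base - 1)))^[k] (P s) with hu
      obtain ⟨i1, i2, i3⟩ := ih
      set w := Function.update u base (u base - 1) with hw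
      have w1 : w (base + 1) = k := by rw [hw, Function.update_of_ne (by omega), i1]
      have w2 := i2
      rw [← Function.update_of_ne (a := base + 2) (a' := base) (by omega) (u base - 1) u, ← hw] at w2
      have w3 : ∀ r < base, w r = s r := fun r hr => by
        rw [hw, Function.update_of_ne (by omega), i3 r hr]
      refine ⟨?_, ?_, ?_⟩
      · rw [hBx, if_pos rfl, (hG2 w).2 _ (by omega) (by omega), w1]
      · rw [hBx, if_neg (by omega), if_neg (by omega), if_pos rfl, (hG2 w).1]
        simp only [List.Vector.ofFn, Fin.cons_zero, Fin.cons_succ, w1, w2]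
        congr 4
        funext i
        exact w3 _ (ha _)
      · intro r hr
        rw [hBx, if_neg (by omega), if_neg (by omega), if_neg (by omega),
          (hG2 w).2 _ (by omega) (by omega), w3 r hr]
  refine ⟨?_, fun r hr hro => ?_⟩
  · rw [Function.update_of_ne (by omega), Function.update_self, (inv _).2.1, hP0]
    simp [List.Vector.ofFn, htl]
  · rw [Function.update_of_ne (by omega), Function.update_of_ne hro, (inv _).2.2 r hr]

theorem good_of_primrec {n : ℕ} {f : List.Vector ℕ n → ℕ} (hf : Nat.Primrec' f) : Good f := by
  induction hf with
  | zero => exact Good.zero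
  | succ => exact Good.succ
  | get i => exact Good.get i
  | comp g _ _ ihf ihg => exact Good.comp g ihf ihg
  | prec _ _ ihf ihg => exact Good.prec ihf ihg

open Nat.Partrec (Code) in
/-- A single counter program which halts from `e, 0, 0, …` iff code `e` halts on `0`. -/
theorem exists_prog : ∃ c : Cmd Act, ∀ e : Code,
    (∃ s', c.sem Act.step (fun r => if r = 0 then Encodable.encode e else 0) s') ↔
      (e.eval 0).Dom := by
  have hp : Primrec₂ (fun e t : ℕ => Encodable.encode (Code.evaln t (Denumerable.ofNat Code e) 0)) := by
    exact Primrec.encode.comp (Code.primrec_evaln.comp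
      (Primrec.pair (Primrec.pair Primrec.snd ((Primrec.ofNat Code).comp Primrec.fst))
        (Primrec.const 0)))
  obtain ⟨F, ⟨c, hc⟩, hF⟩ := good_of_primrec (Nat.Primrec'.prim_iff₂.2 hp) ![0, 1] 2 3
    (fun i => by fin_cases i <;> simp) (by omega) (fun i => by fin_cases i <;> simp)
  refine ⟨.seq (.star (.act (.inc 1))) (.seq c (.act (.dec 2))), fun e => ?_⟩
  set s0 : ℕ → ℕ := fun r => if r = 0 then Encodable.encode e else 0 with hs0
  have hstar : ∀ v, (Cmd.star (.act (.inc 1))).sem Act.step s0 v ↔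
      ∃ t, v = Function.update s0 1 t := by
    intro v
    constructor
    · intro h
      change ReflTransGen _ _ _ at h
      induction h with
      | refl => exact ⟨0, by rw [eq_comm, Function.update_eq_self_iff]; simp [hs0]⟩
      | tail _ h2 ih =>
        obtain ⟨t, rfl⟩ := ih
        change _ = _ at h2
        exact ⟨t + 1, by simp [h2]⟩
    · rintro ⟨t, rfl⟩
      induction t with
      | zero =>
        have : Function.update s0 1 0 = s0 := by
          rw [Function.update_eq_self_iff]; simp [hs0]
        rw [this]; exact ReflTransGen.refl
      | succ t ih =>
        refine ReflTransGen.tail ih ?_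
        change _ = _
        simp
  have hval : ∀ t, F (Function.update s0 1 t) 2 = Encodable.encode (Code.evaln t e 0) := by
    intro t
    rw [(hF _).1]
    simp [List.Vector.ofFn, hs0]
  have hdom : (e.eval 0).Dom ↔ ∃ t, 0 < Encodable.encode (Code.evaln t e 0) := by
    rw [Part.dom_iff_mem]
    simp only [Code.evaln_complete]
    constructor
    · rintro ⟨y, t, ht⟩
      rw [Option.mem_def] at ht
      exact ⟨t, by rw [ht]; simp⟩
    · rintro ⟨t, ht⟩
      cases h : Code.evaln t e 0 with
      | none => simp [h] at ht
      | some y => exact ⟨y, t, h⟩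
  rw [hdom]
  constructor
  · rintro ⟨s', z, h1, z2, h2, h3, -⟩
    obtain ⟨t, rfl⟩ := (hstar _).1 h1
    rw [hc] at h2
    subst h2
    exact ⟨t, by rwa [hval] at h3⟩
  · rintro ⟨t, ht⟩
    exact ⟨_, _, (hstar _).2 ⟨t, rfl⟩, _, (hc _ _).2 rfl, by rwa [hval], rfl⟩

/-! ### Register set automata: abstract transitions -/

structure Atom where
  gn : List ℕ
  eu : ℕ
  ev : ℕ
  x : ℕ
  L : List (Option ℕ)

def evalL (L : List (Option ℕ)) (f : ℕ → Finset ℕ) (d : ℕ) : Finset ℕ :=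
  (L.map fun o =>
    match o with
    | none => ({d} : Finset ℕ)
    | some r' => f r').foldr (· ∪ ·) ∅

def AStep (a : Atom) (f f' : ℕ → Finset ℕ) : Prop :=
  ∃ d, (∀ r ∈ a.gn, d ∉ f r) ∧ f a.eu = f a.ev ∧ f' = Function.update f a.x (evalL a.L f d)

def Atom.WF (N : ℕ) (a : Atom) : Prop :=
  (∀ r ∈ a.gn, r < N + 3) ∧ a.eu < N + 3 ∧ a.ev < N + 3 ∧ a.x < N + 3 ∧
    ∀ r, some r ∈ a.L → r < N + 3

def aEps (N : ℕ) : Atom := ⟨[], N, N, N, [some N]⟩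
def aInc (N r : ℕ) : Atom := ⟨[r], N, N, r, [some r, none]⟩
def aZer (N r : ℕ) : Atom := ⟨[], r, N, N, [some N]⟩
def aClr (N : ℕ) : Atom := ⟨[], N, N, N + 1, []⟩
def aAdd (N : ℕ) : Atom := ⟨[], N, N, N + 1, [some (N + 1), none]⟩
def aPick (N : ℕ) : Atom := ⟨[N + 1], N, N, N + 2, [some (N + 1), none]⟩
def aDec (N r : ℕ) : Atom := ⟨[], r, N + 2, r, [some (N + 1)]⟩

theorem aEps_step (N : ℕ) (f f' : ℕ → Finset ℕ) : AStep (aEps N) f f' ↔ f' = f := by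
  simp [AStep, aEps, evalL]

/-- The gadget for each counter action. Register `N` is always empty; `N+1`, `N+2` are scratch. -/
def gadget (N : ℕ) : Act → Cmd Atom
  | .inc r => .act (aInc N r)
  | .zer r => .act (aZer N r)
  | .dec r => .seq (.act (aClr N)) (.seq (.star (.act (aAdd N)))
      (.seq (.act (aPick N)) (.act (aDec N r))))

theorem gadget_wf (N : ℕ) (a : Act) (h : a.reg < N) : (gadget N a).All (Atom.WF N) := by
  cases a <;> simp [Act.reg] at h <;>
    simp [gadget, Cmd.All, Atom.WF, aInc, aZer, aClr, aAdd, aPick, aDec] <;> omega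

def Rel (N : ℕ) (s : ℕ → ℕ) (f : ℕ → Finset ℕ) : Prop :=
  f N = ∅ ∧ ∀ r < N, s r = (f r).card

theorem Rel.update {N : ℕ} {s : ℕ → ℕ} {f f' : ℕ → Finset ℕ} {r v : ℕ} (h : Rel N s f)
    (hr : r < N) (h1 : ∀ q ≤ N, q ≠ r → f' q = f q) (h2 : (f' r).card = v) :
    Rel N (Function.update s r v) f' := by
  refine ⟨by rw [h1 N le_rfl (by omega), h.1], fun q hq => ?_⟩
  by_cases hqr : q = r
  · subst hqr; simp [h2]
  · rw [Function.update_of_ne hqr, h1 q hq.le hqr, h.2 q hq]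

theorem star_add (N : ℕ) (f : ℕ → Finset ℕ) (hf : f (N + 1) = ∅) (S : Finset ℕ) :
    (Cmd.star (.act (aAdd N))).sem AStep f (Function.update f (N + 1) S) := by
  induction S using Finset.induction_on with
  | empty =>
    have : Function.update f (N + 1) ∅ = f := by rw [Function.update_eq_self_iff, hf]
    rw [this]; exact ReflTransGen.refl
  | insert a S _ ih =>
    refine ReflTransGen.tail ih ⟨a, by simp [aAdd], by simp [aAdd], ?_⟩
    simp [aAdd, evalL]

theorem star_add_inv (N : ℕ) (f f' : ℕ → Finset ℕ)
    (h : (Cmd.star (.act (aAdd N))).sem AStep f f') : ∀ r, r ≠ N + 1 → f' r = f r := by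
  change ReflTransGen _ _ _ at h
  induction h with
  | refl => exact fun _ _ => rfl
  | tail _ h2 ih =>
    intro r hr
    obtain ⟨d, -, -, rfl⟩ := h2
    rw [← ih r hr]
    exact Function.update_of_ne hr _ _

theorem gadget_fwd (N : ℕ) (a : Act) (ha : a.reg < N) (s s' : ℕ → ℕ) (f : ℕ → Finset ℕ)
    (h : a.step s s') (hR : Rel N s f) :
    ∃ f', (gadget N a).sem AStep f f' ∧ Rel N s' f' := by
  cases a with
  | inc r =>
    change r < N at ha
    change s' = _ at h
    subst h
    obtain ⟨d, hd⟩ := Infinite.exists_notMem_finset (f r)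
    refine ⟨_, ⟨d, by simpa [aInc] using hd, rfl, rfl⟩, ?_⟩
    refine hR.update ha (fun q _ hq => Function.update_of_ne hq _ _) ?_
    simp [aInc, evalL, hR.2 r ha]
    rw [Finset.card_insert_of_notMem hd]
  | zer r =>
    change r < N at ha
    obtain ⟨h1, rfl⟩ := h
    refine ⟨f, ⟨0, by simp [aZer], ?_, by simp [aZer, evalL]⟩, hR⟩
    simp only [aZer]
    rw [hR.1, ← Finset.card_eq_zero, ← hR.2 r ha, h1]
  | dec r =>
    change r < N at ha
    obtain ⟨h1, rfl⟩ := h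
    rw [hR.2 r ha] at h1
    obtain ⟨d, hd⟩ := Finset.card_pos.1 h1
    set S := (f r).erase d with hS
    have hSd : S ∪ {d} = f r := by
      rw [Finset.union_comm, ← Finset.insert_eq, hS, Finset.insert_erase hd]
    refine ⟨_, ⟨_, ⟨0, by simp [aClr], rfl, rfl⟩, _, star_add N _ (by simp [aClr, evalL]) S, _,
      ⟨d, by simp [aPick, hS], rfl, rfl⟩, ⟨0, by simp [aDec], ?_, rfl⟩⟩, ?_⟩
    · simp only [aDec, aPick, aClr, evalL]
      rw [Function.update_self, Function.update_of_ne (by omega), Function.update_of_ne (by omega),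
        Function.update_of_ne (by omega)]
      simp [hSd]
    · refine hR.update ha (fun q hqN hq => ?_) ?_
      · simp only [aDec, aPick, aClr]
        rw [Function.update_of_ne hq, Function.update_of_ne (by omega),
          Function.update_of_ne (by omega), Function.update_of_ne (by omega)]
      · simp [aDec, aPick, aClr, evalL, hS, Finset.card_erase_of_mem hd, hR.2 r ha]

theorem gadget_bwd (N : ℕ) (a : Act) (ha : a.reg < N) (s : ℕ → ℕ) (f f' : ℕ → Finset ℕ)
    (h : (gadget N a).sem AStep f f') (hR : Rel N s f) :
    ∃ s', a.step s s' ∧ Rel N s' f' := by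
  cases a with
  | inc r =>
    change r < N at ha
    obtain ⟨d, hd, -, rfl⟩ := h
    refine ⟨_, rfl, hR.update ha (fun q _ hq => Function.update_of_ne hq _ _) ?_⟩
    have hd : d ∉ f r := by simpa [aInc] using hd
    simp [aInc, evalL, hR.2 r ha]
    rw [Finset.card_insert_of_notMem hd]
  | zer r =>
    change r < N at ha
    obtain ⟨d, -, h1, rfl⟩ := h
    refine ⟨s, ⟨?_, rfl⟩, by simpa [aZer, evalL] using hR⟩
    change f r = f N at h1
    rw [hR.2 r ha, h1, hR.1]; rfl
  | dec r =>
    change r < N at ha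
    obtain ⟨f1, ⟨_, -, -, h1⟩, f2, h2, f3, ⟨d, hd, -, h3⟩, ⟨_, -, h4, h5⟩⟩ := h
    have h2 := star_add_inv _ _ _ h2
    have e2 : ∀ q, q ≠ N + 1 → f2 q = f q := by
      intro q hq
      rw [h2 q hq, h1]
      exact Function.update_of_ne hq _ _
    have e3 : ∀ q, q ≠ N + 2 → f3 q = f2 q := by
      intro q hq
      rw [h3]
      exact Function.update_of_ne hq _ _
    have hd : d ∉ f2 (N + 1) := hd _ (by simp [aPick])
    have e4 : f3 (N + 2) = f2 (N + 1) ∪ {d} := by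
      rw [h3]; simp [aPick, evalL]
    change f3 r = f3 (N + 2) at h4
    rw [e4, e3 r (by omega), e2 r (by omega)] at h4
    have hcard : (f r).card = (f2 (N + 1)).card + 1 := by
      rw [h4, Finset.union_comm, ← Finset.insert_eq, Finset.card_insert_of_notMem hd]
    refine ⟨_, ⟨by rw [hR.2 r ha]; omega, rfl⟩, hR.update ha (fun q hqN hq => ?_) ?_⟩
    · rw [h5, ← e2 q (by omega), ← e3 q (by omega)]
      exact Function.update_of_ne hq _ _
    · rw [h5, hR.2 r ha, hcard]
      simp [aDec, evalL, e3 (N + 1) (by omega)]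

/-! ### From abstract transitions to concrete automata -/

def toTrans (k N : ℕ) (t : ℕ × Atom × ℕ) : CEqTrans (k + 1) where
  src := t.1
  letter := 0
  gIn := []
  gNin := t.2.1.gn
  gEq := (List.range (N + 3)).map fun r => if r = t.2.1.ev then [t.2.1.eu] else []
  upd := (List.range (N + 3)).map fun r => if r = t.2.1.x then t.2.1.L else [some r]
  tgt := t.2.2

def Supp (N : ℕ) (f : ℕ → Finset ℕ) : Prop := ∀ r, N + 3 ≤ r → f r = ∅

theorem getD_map_range {β : Type} (n r : ℕ) (h : ℕ → List β) :
    ((List.range n).map h).getD r [] = if r < n then h r else [] := by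
  split_ifs with hr
  · simp [List.getD, hr]
  · simp [List.getD, hr]

theorem toTrans_apply (k N : ℕ) (t : ℕ × Atom × ℕ) (ht : t.2.1.WF N) (f : ℕ → Finset ℕ)
    (hf : Supp N f) (d : ℕ) :
    (toTrans k N t).apply f d = Function.update f t.2.1.x (evalL t.2.1.L f d) := by
  funext r
  simp only [CEqTrans.apply, toTrans, getD_map_range]
  by_cases hr : r < N + 3
  · by_cases hx : r = t.2.1.x
    · subst hx
      rw [if_pos hr, if_pos rfl, Function.update_self]; rfl
    · rw [if_pos hr, if_neg hx, Function.update_of_ne hx]; simp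
  · have : r ≠ t.2.1.x := by have := ht.2.2.2.1; omega
    rw [if_neg hr, Function.update_of_ne this, hf r (by omega)]; simp

theorem AStep.supp {N : ℕ} {a : Atom} (ha : a.WF N) {f f' : ℕ → Finset ℕ} (h : AStep a f f')
    (hf : Supp N f) : Supp N f' := by
  obtain ⟨d, -, -, rfl⟩ := h
  intro r hr
  rw [Function.update_of_ne (by have := ha.2.2.2.1; omega), hf r hr]

theorem step_iff {k N : ℕ} {A : CRsAEq (k + 1)} {D : List (ℕ × Atom × ℕ)}
    (hA : A.trans = D.map (toTrans k N)) (hD : ∀ t ∈ D, t.2.1.WF N)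
    (c c' : ℕ × (ℕ → Finset ℕ)) (hc : Supp N c.2) :
    (∃ x, A.Step c x c') ↔ TStep AStep D c c' := by
  constructor
  · rintro ⟨⟨l, d⟩, t, ht, h1, h2, h3, h4, h5, rfl⟩
    rw [hA] at ht
    obtain ⟨u, hu, rfl⟩ := List.mem_map.1 ht
    refine ⟨u.2.1, ?_, d, h4, ?_, toTrans_apply k N u (hD u hu) c.2 hc d⟩
    · rw [← h1]; exact hu
    · apply h5 u.2.1.ev
      simp only [toTrans, getD_map_range]
      rw [if_pos (hD u hu).2.2.1]; simp
  · rintro ⟨a, ha, d, h4, h5, h6⟩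
    refine ⟨(0, d), toTrans k N (c.1, a, c'.1), ?_, rfl, rfl, ?_, h4, ?_, ?_⟩
    · rw [hA]; exact List.mem_map_of_mem ha
    · simp [toTrans]
    · intro r r' hr'
      simp only [toTrans, getD_map_range] at hr'
      split_ifs at hr' with i1 i2
      · simp only [List.mem_singleton] at hr'
        rw [hr', i2, h5]
      · simp at hr'
      · simp at hr'
    · rw [toTrans_apply k N _ (hD _ ha) c.2 hc d]
      exact Prod.ext rfl h6

theorem run_iff {k N : ℕ} {A : CRsAEq (k + 1)} {D : List (ℕ × Atom × ℕ)}
    (hA : A.trans = D.map (toTrans k N)) (hD : ∀ t ∈ D, t.2.1.WF N)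
    (c c' : ℕ × (ℕ → Finset ℕ)) (hc : Supp N c.2) :
    (∃ w, A.Run c w c') ↔ Reach AStep D c c' := by
  constructor
  · rintro ⟨w, hw⟩
    induction hw with
    | nil c => exact ReflTransGen.refl
    | cons h1 _ ih =>
      have h2 := (step_iff hA hD _ _ hc).1 ⟨_, h1⟩
      refine ReflTransGen.head h2 (ih ?_)
      obtain ⟨a, ha, hs⟩ := h2
      exact hs.supp (hD _ ha) hc
  · intro h
    induction h using ReflTransGen.head_induction_on with
    | refl => exact ⟨[], .nil _⟩
    | head h1 _ ih =>
      obtain ⟨x, hx⟩ := (step_iff hA hD _ _ hc).2 h1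
      obtain ⟨a, ha, hs⟩ := h1
      obtain ⟨w, hw⟩ := ih (hs.supp (hD _ ha) hc)
      exact ⟨x :: w, .cons hx hw⟩

/-! ### The input chain -/

def chain (N m s : ℕ) (D : List (ℕ × Atom × ℕ)) (e : ℕ) : List (ℕ × Atom × ℕ) :=
  D ++ ((m + e, aEps N, s) :: (List.range e).map fun i => (m + i, aInc N 0, m + i + 1))

def Loaded (i : ℕ) (f : ℕ → Finset ℕ) : Prop := (f 0).card = i ∧ ∀ r, r ≠ 0 → f r = ∅

theorem Loaded.inc {N i : ℕ} {f f' : ℕ → Finset ℕ} (h : Loaded i f) (hs : AStep (aInc N 0) f f') :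
    Loaded (i + 1) f' := by
  obtain ⟨d, hd, -, rfl⟩ := hs
  have hd : d ∉ f 0 := by simpa [aInc] using hd
  refine ⟨?_, fun r hr => ?_⟩
  · simp [aInc, evalL]
    rw [Finset.card_insert_of_notMem hd, h.1]
  · rw [← h.2 r hr]; exact Function.update_of_ne hr _ _

theorem chain_iff (N m s t : ℕ) (D : List (ℕ × Atom × ℕ)) (e : ℕ) (hs : s < m) (ht : t < m)
    (hD : ∀ tr ∈ D, tr.1 < m ∧ tr.2.2 < m) (f' : ℕ → Finset ℕ) :
    Reach AStep (chain N m s D e) (m, fun _ => ∅) (t, f') ↔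
      ∃ f, Loaded e f ∧ Reach AStep D (s, f) (t, f') := by
  constructor
  · intro h
    have key : ∀ c', Reach AStep (chain N m s D e) (m, fun _ => ∅) c' →
        (c'.1 < m ∧ ∃ f, Loaded e f ∧ Reach AStep D (s, f) c') ∨
        (∃ i, c'.1 = m + i ∧ Loaded i c'.2) := by
      intro c' h
      induction h with
      | refl => exact Or.inr ⟨0, rfl, rfl, fun _ _ => rfl⟩
      | tail _ h2 ih =>
        rename_i u v _
        obtain ⟨u1, u2⟩ := u
        obtain ⟨v1, v2⟩ := v
        obtain ⟨a, ha, hst⟩ := h2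
        simp only [chain, List.mem_append, List.mem_cons, List.mem_map, List.mem_range,
          Prod.mk.injEq] at ha
        simp only at hst ih ⊢
        rcases ha with ha | ⟨rfl, rfl, rfl⟩ | ⟨i, hi, rfl, rfl, rfl⟩
        · have hb := hD _ ha
          simp only at hb
          rcases ih with ⟨_, f, hf, hr⟩ | ⟨i, hi, _⟩
          · exact Or.inl ⟨hb.2, f, hf, ReflTransGen.tail hr ⟨a, ha, hst⟩⟩
          · omega
        · rcases ih with ⟨h1, _⟩ | ⟨i, hi, hin⟩
          · omega
          · have : i = e := by omega
            subst this
            rw [aEps_step] at hst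
            subst hst
            exact Or.inl ⟨hs, _, hin, ReflTransGen.refl⟩
        · rcases ih with ⟨h1, _⟩ | ⟨j, hj, hin⟩
          · omega
          · have : j = i := by omega
            subst this
            exact Or.inr ⟨j + 1, by omega, hin.inc hst⟩
    rcases key _ h with ⟨_, h⟩ | ⟨i, hi, _⟩
    · exact h
    · simp only at hi; omega
  · rintro ⟨f, hf, hr⟩
    -- the chain can load exactly the set `f 0`
    have load : ∀ S : Finset ℕ, S.card ≤ e →
        Reach AStep (chain N m s D e) (m, fun _ => ∅)
          (m + S.card, Function.update (fun _ => ∅) 0 S) := by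
      intro S
      induction S using Finset.induction_on with
      | empty =>
        intro _
        have : Function.update (fun _ : ℕ => (∅ : Finset ℕ)) 0 ∅ = fun _ => ∅ := by
          rw [Function.update_eq_self_iff]
        rw [this]; exact ReflTransGen.refl
      | insert a S haS ih =>
        intro hc
        rw [Finset.card_insert_of_notMem haS] at hc ⊢
        refine ReflTransGen.tail (ih (by omega)) ⟨aInc N 0, ?_, a, ?_, rfl, ?_⟩
        · simp only [chain, List.mem_append, List.mem_cons, List.mem_map, List.mem_range]
          exact Or.inr (Or.inr ⟨S.card, by omega, rfl⟩)
        · simpa [aInc] using haS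
        · simp [aInc, evalL]
    have h1 := load (f 0) hf.1.le
    have hff : Function.update (fun _ : ℕ => (∅ : Finset ℕ)) 0 (f 0) = f := by
      funext r
      by_cases hr : r = 0
      · subst hr; simp
      · rw [Function.update_of_ne hr, hf.2 r hr]
    rw [hff, hf.1] at h1
    refine ReflTransGen.trans (ReflTransGen.tail h1 (b := (m + e, f)) (c := (s, f))
      ⟨aEps N, ?_, (aEps_step _ _ _).2 rfl⟩) ?_
    · simp [chain]
    · exact hr.map (c := (s, f)) (c' := (t, f')) (fun q => q)
        (fun tr htr => by
          simp only [chain, List.mem_append]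
          exact Or.inl htr)

def theAut (k N m s t : ℕ) (D : List (ℕ × Atom × ℕ)) (e : ℕ) : CRsAEq (k + 1) where
  nQ := m + e + 1
  nR := N + 3
  trans := (chain N m s D e).map (toTrans k N)
  I := [m]
  F := [t]

theorem chain_prop {N m s : ℕ} {D : List (ℕ × Atom × ℕ)} (e : ℕ) (hN : 0 < N) (hs : s < m)
    (hD : ∀ tr ∈ D, tr.1 < m ∧ tr.2.1.WF N ∧ tr.2.2 < m) :
    ∀ tr ∈ chain N m s D e, tr.1 < m + e + 1 ∧ tr.2.1.WF N ∧ tr.2.2 < m + e + 1 := by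
  intro tr htr
  simp only [chain, List.mem_append, List.mem_cons, List.mem_map, List.mem_range] at htr
  rcases htr with h | rfl | ⟨i, hi, rfl⟩
  · have := hD _ h
    exact ⟨by omega, this.2.1, by omega⟩
  · refine ⟨by simp, by simp [Atom.WF, aEps], by simp; omega⟩
  · refine ⟨by simp; omega, by simp [Atom.WF, aInc], by simp; omega⟩

theorem theAut_wf {k N m s t : ℕ} {D : List (ℕ × Atom × ℕ)} (e : ℕ) (hN : 0 < N) (hs : s < m)
    (ht : t < m) (hD : ∀ tr ∈ D, tr.1 < m ∧ tr.2.1.WF N ∧ tr.2.2 < m) :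
    (theAut k N m s t D e).WellFormed := by
  refine ⟨by simp [theAut], by simp [theAut]; omega, fun u hu => ?_⟩
  obtain ⟨tr, htr, rfl⟩ := List.mem_map.1 hu
  obtain ⟨h1, h2, h3⟩ := chain_prop e hN hs hD tr htr
  refine ⟨h1, h3, by simp [toTrans], h2.1, by simp [toTrans], by simp [toTrans, theAut], ?_,
    by simp [toTrans, theAut], ?_⟩
  · intro l hl r' hr'
    obtain ⟨r, hr, rfl⟩ := List.mem_map.1 hl
    split_ifs at hr' with i1
    · simp only [List.mem_singleton] at hr'
      rw [hr']; exact h2.2.1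
    · simp at hr'
  · intro l hl r' hr'
    obtain ⟨r, hr, rfl⟩ := List.mem_map.1 hl
    split_ifs at hr' with i1
    · exact h2.2.2.2.2 _ hr'
    · simp only [List.mem_singleton, Option.some.injEq] at hr'
      rw [hr']; exact List.mem_range.1 hr

theorem theAut_lang {k N m s t : ℕ} {D : List (ℕ × Atom × ℕ)} (e : ℕ) (hN : 0 < N) (hs : s < m)
    (ht : t < m) (hD : ∀ tr ∈ D, tr.1 < m ∧ tr.2.1.WF N ∧ tr.2.2 < m) :
    (theAut k N m s t D e).Lang ≠ ∅ ↔
      ∃ f f', Loaded e f ∧ Reach AStep D (s, f) (t, f') := by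
  have hrun := fun c' => run_iff (k := k) (N := N) (A := theAut k N m s t D e) rfl
    (fun tr htr => (chain_prop e hN hs hD tr htr).2.1) (m, fun _ => ∅) c' (fun _ _ => rfl)
  have hch := chain_iff N m s t D e hs ht (fun tr htr => ⟨(hD tr htr).1, (hD tr htr).2.2⟩)
  rw [← Set.nonempty_iff_ne_empty]
  constructor
  · rintro ⟨w, q, hq, c, hw, hc⟩
    have hq : q = m := by simpa [theAut] using hq
    have hct : c.1 = t := by simpa [theAut] using hc
    subst hq
    obtain ⟨c1, c2⟩ := c
    simp only at hct
    subst hct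
    obtain ⟨f, hf⟩ := (hch _).1 ((hrun _).1 ⟨w, hw⟩)
    exact ⟨f, c2, hf⟩
  · rintro ⟨f, f', hf⟩
    obtain ⟨w, hw⟩ := (hrun _).2 ((hch f').2 ⟨f, hf⟩)
    exact ⟨w, m, by simp [theAut], _, hw, by simp [theAut]⟩

theorem primrec_mkTrans (k : ℕ) : Primrec (fun p :
    ℕ × Fin (k + 1) × List ℕ × List ℕ × List (List ℕ) × List (List (Option ℕ)) × ℕ =>
    (⟨p.1, p.2.1, p.2.2.1, p.2.2.2.1, p.2.2.2.2.1, p.2.2.2.2.2.1, p.2.2.2.2.2.2⟩ :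
      CEqTrans (k + 1))) :=
  Primrec.of_equiv_symm (e := 
    { toFun := fun t : CEqTrans (k + 1) => (t.src, t.letter, t.gIn, t.gNin, t.gEq, t.upd, t.tgt)
      invFun := fun p =>
        ⟨p.1, p.2.1, p.2.2.1, p.2.2.2.1, p.2.2.2.2.1, p.2.2.2.2.2.1, p.2.2.2.2.2.2⟩
      left_inv := fun _ => rfl
      right_inv := fun _ => rfl })

theorem primrec_mkAut (k : ℕ) : Primrec (fun p :
    ℕ × ℕ × List (CEqTrans (k + 1)) × List ℕ × List ℕ =>
    (⟨p.1, p.2.1, p.2.2.1, p.2.2.2.1, p.2.2.2.2⟩ : CRsAEq (k + 1))) :=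
  Primrec.of_equiv_symm (e :=
    { toFun := fun A : CRsAEq (k + 1) => (A.nQ, A.nR, A.trans, A.I, A.F)
      invFun := fun p => ⟨p.1, p.2.1, p.2.2.1, p.2.2.2.1, p.2.2.2.2⟩
      left_inv := fun _ => rfl
      right_inv := fun _ => rfl })

theorem primrec_toTrans {γ : Type} [Primcodable γ] (k N : ℕ) (a : Atom) {q q' : γ → ℕ}
    (hq : Primrec q) (hq' : Primrec q') :
    Primrec (fun x => toTrans k N (q x, a, q' x)) :=
  (primrec_mkTrans k).comp (hq.pair ((Primrec.const 0).pair ((Primrec.const []).pair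
    ((Primrec.const a.gn).pair
      ((Primrec.const ((List.range (N + 3)).map fun r => if r = a.ev then [a.eu] else [])).pair
        ((Primrec.const ((List.range (N + 3)).map fun r => if r = a.x then a.L else [some r])).pair
          hq'))))))

theorem primrec_theAut (k N m s t : ℕ) (D : List (ℕ × Atom × ℕ)) :
    Primrec (theAut k N m s t D) := by
  have hadd : Primrec (fun e => m + e) := Primrec.nat_add.comp (Primrec.const m) Primrec.id
  have htr : Primrec (fun e => D.map (toTrans k N) ++ (toTrans k N (m + e, aEps N, s) ::
      (List.range e).map fun i => toTrans k N (m + i, aInc N 0, m + i + 1))) := by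
    refine Primrec.list_append.comp (Primrec.const _) (Primrec.list_cons.comp
      (primrec_toTrans k N _ hadd (Primrec.const s)) (Primrec.list_map Primrec.list_range ?_))
    exact primrec_toTrans k N _ (hadd.comp Primrec.snd)
      (Primrec.succ.comp (hadd.comp Primrec.snd))
  refine ((primrec_mkAut k).comp ((Primrec.succ.comp hadd).pair ((Primrec.const (N + 3)).pair
    (htr.pair ((Primrec.const [m]).pair (Primrec.const [t])))))).of_eq fun e => ?_
  simp [theAut, chain, Function.comp_def]

theorem main (k : ℕ) :
    ¬ ∃ f : CRsAEq (k + 1) → Bool, Computable f ∧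
        ∀ A : CRsAEq (k + 1), A.WellFormed → (f A = true ↔ CRsAEq.Lang A = ∅) := by
  rintro ⟨F, hF, hdec⟩
  obtain ⟨c, hc⟩ := exists_prog
  obtain ⟨M, hM⟩ := c.exists_bound
  have hN : c.All (fun a => a.reg < M + 1) := hM.mono fun a h => by omega
  generalize hNM : M + 1 = N at hN
  have hN0 : 0 < N := by omega
  obtain ⟨m, D, s, t, hs, ht, hD, hreach⟩ := thompson_nat AStep (aEps N) (aEps_step N)
    (Atom.WF N) (by simp [Atom.WF, aEps]) (c.subst (gadget N)) (hN.subst (gadget_wf N))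
  have key : ∀ e : Nat.Partrec.Code,
      (theAut k N m s t D (Encodable.encode e)).Lang ≠ ∅ ↔ (e.eval 0).Dom := by
    intro e
    rw [theAut_lang _ hN0 hs ht hD, ← hc]
    have hrel : ∀ f, Loaded (Encodable.encode e) f →
        Rel N (fun r => if r = 0 then Encodable.encode e else 0) f := by
      intro f hf
      refine ⟨hf.2 N (by omega), fun r _ => ?_⟩
      by_cases hr : r = 0
      · subst hr; simp [hf.1]
      · simp [hr, hf.2 r hr]
    constructor
    · rintro ⟨f, f', hf, hr⟩
      obtain ⟨s', hs', _⟩ := sim_bwd (gadget_bwd N) c hN _ _ _ ((hreach _ _).2 hr) (hrel f hf)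
      exact ⟨s', hs'⟩
    · rintro ⟨s', hs'⟩
      have hf : Loaded (Encodable.encode e)
          (Function.update (fun _ => ∅) 0 (Finset.range (Encodable.encode e))) :=
        ⟨by simp, fun r hr => Function.update_of_ne hr _ _⟩
      obtain ⟨f', hf', _⟩ := sim_fwd (gadget_fwd N) c hN _ _ _ hs' (hrel _ hf)
      exact ⟨_, f', hf, (hreach _ _).1 hf'⟩
  refine ComputablePred.halting_problem 0 ?_
  refine ComputablePred.computable_iff.2
    ⟨fun e => !(F (theAut k N m s t D (Encodable.encode e))), ?_, ?_⟩
  · exact Primrec.not.to_comp.comp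
      (hF.comp ((primrec_theAut k N m s t D).to_comp.comp Computable.encode))
  · funext e
    rw [← key e, ne_eq, ← hdec _ (theAut_wf _ hN0 hs ht hD)]
    simp

end RsaUndec

/-- The emptiness problem for register set automata with register
equality test is undecidable: no computable function decides, given (an encoding of)
such an automaton, whether its language is empty. -/
theorem rsaeq_emptiness_undecidable (k : ℕ) :
    ¬ ∃ f : CRsAEq (k + 1) → Bool, Computable f ∧
        ∀ A : CRsAEq (k + 1), A.WellFormed → (f A = true ↔ CRsAEq.Lang A = ∅) := by
  exact RsaUndec.main k
end
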